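/- Let G be a basic CUH graph that omits D and in which at least one color class does not form an independent set. If H is a non-monochromatic minimally omitted subgraph of G that is not isomorphic to any of the graphs T_r, T̃_r, T_b, T̃_b, D, D̃, then both color classes of H are independent sets of size at least 2. -/

import Mathlib

open SimpleGraph

/-- A partial colored isomorphism of the 2-colored graph `(G, red)`, defined on the set `S`:
an injective map preserving colors and adjacency on `S`. -/
def IsPartialIso {V : Type} (G : SimpleGraph V) (red : V → Prop) (S : Set V) (f : V → V) :
    Prop :=
  Set.InjOn f S ∧ (∀ v ∈ S, (red (f v) ↔ red v)) ∧
    ∀ u ∈ S, ∀ v ∈ S, (G.Adj (f u) (f v) ↔ G.Adj u v)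

/-- A 2-colored graph is ultrahomogeneous if every isomorphism between two finite induced
colored subgraphs extends to a color-preserving automorphism. -/
def Ultrahomogeneous {V : Type} (G : SimpleGraph V) (red : V → Prop) : Prop :=
  ∀ S : Set V, S.Finite → ∀ f : V → V, IsPartialIso G red S f →
    ∃ ψ : G ≃g G, (∀ v, red (ψ v) ↔ red v) ∧ ∀ v ∈ S, ψ v = f v

/-- The set `P` induces a disjoint union of cliques in `G` (no induced monochromatic `P₃`). -/
def IsUnionOfCliques {V : Type} (G : SimpleGraph V) (P : Set V) : Prop :=
  ∀ u ∈ P, ∀ v ∈ P, ∀ w ∈ P, G.Adj u v → G.Adj v w → u ≠ w → G.Adj u w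

/-- `M` is an inclusion-wise maximal clique of the subgraph of `G` induced on `P`. -/
def IsMaxCliqueIn {V : Type} (G : SimpleGraph V) (P : Set V) (M : Set V) : Prop :=
  M ⊆ P ∧ G.IsClique M ∧ ∀ M' : Set V, M' ⊆ P → G.IsClique M' → M ⊆ M' → M = M'

/-- `S` is an independent set in `G`. -/
def IsIndepIn {V : Type} (G : SimpleGraph V) (S : Set V) : Prop :=
  ∀ u ∈ S, ∀ v ∈ S, ¬ G.Adj u v

/-- The 2-colored graph `(H, redH)` is realized in `(G, red)`, i.e. isomorphic to an
induced colored subgraph of `G`. -/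
def Realizes {V : Type} (G : SimpleGraph V) (red : V → Prop) {W : Type} (H : SimpleGraph W)
    (redH : W → Prop) : Prop :=
  ∃ f : W → V, Function.Injective f ∧ (∀ w, red (f w) ↔ redH w) ∧
    ∀ u w : W, G.Adj (f u) (f w) ↔ H.Adj u w

/-- `(H, redH)` is minimally omitted in `(G, red)`: it is omitted, but every proper induced
subgraph of it is realized. -/
def MinOmitted {V : Type} (G : SimpleGraph V) (red : V → Prop) {W : Type} (H : SimpleGraph W)
    (redH : W → Prop) : Prop :=
  ¬ Realizes G red H redH ∧
    ∀ S : Set W, S ≠ Set.univ → Realizes G red (H.induce S) (fun x => redH x.1)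

/-- Isomorphism of 2-colored graphs. -/
def ColoredIso {V : Type} (G : SimpleGraph V) (red : V → Prop) {W : Type} (H : SimpleGraph W)
    (redH : W → Prop) : Prop :=
  ∃ e : G ≃g H, ∀ v, red v ↔ redH (e v)

/-- The graph obtained from `G` by complementing the cross edges while keeping the
edges inside each color class. -/
def crossComp {V : Type} (G : SimpleGraph V) (red : V → Prop) : SimpleGraph V :=
  SimpleGraph.fromRel (fun u v =>
    ((red u ↔ red v) ∧ G.Adj u v) ∨ (¬ (red u ↔ red v) ∧ ¬ G.Adj u v))

/-- The blow-up of the 2-colored graph `(H, redH)` (whose red class should be independent),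
replacing every red vertex by a copy of `I` forming a clique, joined to the neighbors of the
original vertex. -/
def blowUp {V : Type} (H : SimpleGraph V) (redH : V → Prop) (I : Type) :
    SimpleGraph ({v : V // redH v} × I ⊕ {v : V // ¬ redH v}) :=
  SimpleGraph.fromRel (fun x y =>
    match x, y with
    | Sum.inl (u, i), Sum.inl (u', i') => H.Adj u.1 u'.1 ∨ (u = u' ∧ i ≠ i')
    | Sum.inl (u, _), Sum.inr b => H.Adj u.1 b.1
    | Sum.inr b, Sum.inl (u, _) => H.Adj b.1 u.1
    | Sum.inr b, Sum.inr b' => H.Adj b.1 b'.1)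

/-- The coloring of the blow-up: all vertices replacing red vertices are red. -/
def blowUpRed (V : Type) (redH : V → Prop) (I : Type) :
    ({v : V // redH v} × I ⊕ {v : V // ¬ redH v}) → Prop :=
  Sum.elim (fun _ => True) (fun _ => False)

/-- `(G, red)` is a blow-up with the red class blown up: it is isomorphic (as a colored graph)
to the blow-up of some `(H, redH)` with independent red class by an `i`-clique, `2 ≤ i ≤ ℵ₀`. -/
def IsBlowUpOf {V : Type} (G : SimpleGraph V) (red : V → Prop) : Prop :=
  ∃ (U : Type) (H : SimpleGraph U) (redH : U → Prop) (I : Type),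
    (∀ u v : U, redH u → redH v → ¬ H.Adj u v) ∧
    2 ≤ Cardinal.mk I ∧ Cardinal.mk I ≤ Cardinal.aleph0 ∧
    ∃ e : G ≃g blowUp H redH I, ∀ v, red v ↔ blowUpRed U redH I (e v)

/-- `(G, red)` is a blow-up (of one of its two color classes). -/
def IsBlowUp {V : Type} (G : SimpleGraph V) (red : V → Prop) : Prop :=
  IsBlowUpOf G red ∨ IsBlowUpOf G (fun v => ¬ red v)

/-- A CUH graph: a countably infinite ultrahomogeneous 2-colored graph in which both
color classes induce disjoint unions of cliques. -/
def IsCUH {V : Type} (G : SimpleGraph V) (red : V → Prop) : Prop :=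
  Countable V ∧ Infinite V ∧ Ultrahomogeneous G red ∧
    IsUnionOfCliques G {v | red v} ∧ IsUnionOfCliques G {v | ¬ red v}

/-- A basic CUH graph: a CUH graph which is not a blow-up and where both independence
numbers are at least 2. -/
def IsBasicCUH {V : Type} (G : SimpleGraph V) (red : V → Prop) : Prop :=
  IsCUH G red ∧ ¬ IsBlowUp G red ∧
    (∃ u v, red u ∧ red v ∧ u ≠ v ∧ ¬ G.Adj u v) ∧
    (∃ u v, ¬ red u ∧ ¬ red v ∧ u ≠ v ∧ ¬ G.Adj u v)

/-- The graph `D`: red vertices `0, 1`, blue vertices `2, 3`, edges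
`{01, 23, 02, 03, 12}` (a 2-colored diamond). -/
def Dgraph : SimpleGraph (Fin 4) :=
  SimpleGraph.fromRel (fun x y =>
    (x = 0 ∧ y = 1) ∨ (x = 2 ∧ y = 3) ∨ (x = 0 ∧ y = 2) ∨ (x = 0 ∧ y = 3) ∨ (x = 1 ∧ y = 2))

/-- The coloring of `D` and `D̃`: `0, 1` are red, `2, 3` are blue. -/
def Dred : Fin 4 → Prop := fun x => x = 0 ∨ x = 1

/-- The graph `D̃`, the cross-edge complement of `D`: the path `0 – 1 – 3 – 2`. -/
def Dtilde : SimpleGraph (Fin 4) :=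
  SimpleGraph.fromRel (fun x y => (x = 0 ∧ y = 1) ∨ (x = 1 ∧ y = 3) ∨ (x = 3 ∧ y = 2))

/-- `T_r`: the triangle with two red vertices and one blue vertex. -/
def Tr : SimpleGraph (Fin 3) := ⊤

/-- The coloring of `T_r` and `T̃_r`: `0, 1` red, `2` blue. -/
def TrRed : Fin 3 → Prop := fun x => x = 0 ∨ x = 1

/-- `T̃_r`: a red edge together with an isolated blue vertex. -/
def TrTilde : SimpleGraph (Fin 3) := SimpleGraph.fromRel (fun x y => x = 0 ∧ y = 1)

/-- `T_b`: the triangle with one red vertex and two blue vertices. -/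
def Tb : SimpleGraph (Fin 3) := ⊤

/-- The coloring of `T_b` and `T̃_b`: `0` red, `1, 2` blue. -/
def TbRed : Fin 3 → Prop := fun x => x = 0

/-- `T̃_b`: a blue edge together with an isolated red vertex. -/
def TbTilde : SimpleGraph (Fin 3) := SimpleGraph.fromRel (fun x y => x = 1 ∧ y = 2)

/-! Homogeneity and the omission of `D` force the number of cross edges between two red vertices of
one clique and two blue vertices of one clique to be even: the graph is balanced, so all cross edges
between two cliques are determined by those at one vertex of each. As it is moreover not a blow-up,
neighborhoods are infinite, in the number of cliques they meet and, as far as they contain two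
vertices of a clique, inside each clique.

Let `H` be minimally omitted. Amalgamating two one-vertex deletions of `H` shows that a color class
of `H` with an edge is a single clique. Were there a color class that is a single clique, the
infinitude of neighborhoods would supply the vertices needed to realize `H`. Exchanging the colors
and complementing the cross edges preserve all hypotheses, which leaves few cases to treat. -/

theorem exists_injective_mem_of_infinite {α ι : Type*} [Finite ι] {S : Set α} (hS : S.Infinite) :
    ∃ x : ι → α, Function.Injective x ∧ ∀ i, x i ∈ S := by
  obtain ⟨n, ⟨e⟩⟩ := Finite.exists_equiv_fin ι
  let g := e.toEmbedding.trans (Fin.valEmbedding.trans (hS.natEmbedding S))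
  exact ⟨fun i => g i, Subtype.val_injective.comp g.injective, fun i => (g i).2⟩

/-- A 2-colored graph whose color classes are disjoint unions of cliques, split into its red
(left) and blue (right) vertices: being in the same clique is an equivalence relation on each
side, and the edges between the two sides are arbitrary. -/
structure CliquePair (R B : Type*) where
  /-- Being in the same left clique. -/
  left : Setoid R
  /-- Being in the same right clique. -/
  right : Setoid B
  /-- Adjacency between a left and a right vertex. -/
  cross : R → B → Prop

namespace CliquePair

variable {R B : Type*} {X : CliquePair R B}

/-- Interchange of the two colors. -/
@[simps] def flip (X : CliquePair R B) : CliquePair B R :=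
  ⟨X.right, X.left, fun b r => X.cross r b⟩

/-- Complementation of the cross edges. -/
@[simps] def compl (X : CliquePair R B) : CliquePair R B :=
  ⟨X.left, X.right, fun r b => ¬ X.cross r b⟩

/-! ### Homogeneity -/

/-- A color-preserving automorphism. -/
structure Aut (X : CliquePair R B) where
  /-- The action on left vertices. -/
  onLeft : R ≃ R
  /-- The action on right vertices. -/
  onRight : B ≃ B
  left_iff : ∀ {r r'}, X.left (onLeft r) (onLeft r') ↔ X.left r r'
  right_iff : ∀ {b b'}, X.right (onRight b) (onRight b') ↔ X.right b b'
  cross_iff : ∀ {r b}, X.cross (onLeft r) (onRight b) ↔ X.cross r b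

namespace Aut

/-- An automorphism after interchange of the colors. -/
def flip (f : X.Aut) : X.flip.Aut :=
  ⟨f.onRight, f.onLeft, f.right_iff, f.left_iff, f.cross_iff⟩

/-- An automorphism after complementation of the cross edges. -/
def compl (f : X.Aut) : X.compl.Aut :=
  ⟨f.onLeft, f.onRight, f.left_iff, f.right_iff, not_congr f.cross_iff⟩

end Aut

/-- Two tuples of vertices, possibly of different structures, induce isomorphic substructures
via the map taking one tuple to the other. -/
structure SameType {R' B' : Type*} {ι κ : Type*} (X : CliquePair R B) (X' : CliquePair R' B')
    (x : ι → R) (y : κ → B) (x' : ι → R') (y' : κ → B') : Prop where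
  eq_left : ∀ i j, x i = x j ↔ x' i = x' j
  eq_right : ∀ i j, y i = y j ↔ y' i = y' j
  left_iff : ∀ i j, X.left (x i) (x j) ↔ X'.left (x' i) (x' j)
  right_iff : ∀ i j, X.right (y i) (y j) ↔ X'.right (y' i) (y' j)
  cross_iff : ∀ i j, X.cross (x i) (y j) ↔ X'.cross (x' i) (y' j)

/-- Ultrahomogeneity. Finite tuples are indexed by `Fin`; see `IsHomogeneous.exists_aut` for
arbitrary finite index types. -/
def IsHomogeneous (X : CliquePair R B) : Prop :=
  ∀ (m n : ℕ) (x x' : Fin m → R) (y y' : Fin n → B), X.SameType X x y x' y' →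
    ∃ f : X.Aut, (∀ i, f.onLeft (x i) = x' i) ∧ ∀ j, f.onRight (y j) = y' j

namespace IsHomogeneous

theorem exists_aut (h : X.IsHomogeneous) {ι κ : Type*} [Finite ι] [Finite κ] {x x' : ι → R}
    {y y' : κ → B} (hxy : X.SameType X x y x' y') :
    ∃ f : X.Aut, (∀ i, f.onLeft (x i) = x' i) ∧ ∀ j, f.onRight (y j) = y' j := by
  obtain ⟨m, ⟨e⟩⟩ := Finite.exists_equiv_fin ι
  obtain ⟨n, ⟨e'⟩⟩ := Finite.exists_equiv_fin κ
  obtain ⟨f, hx, hy⟩ := h m n (x ∘ e.symm) (x' ∘ e.symm) (y ∘ e'.symm) (y' ∘ e'.symm)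
    ⟨fun _ _ => hxy.eq_left _ _, fun _ _ => hxy.eq_right _ _, fun _ _ => hxy.left_iff _ _,
      fun _ _ => hxy.right_iff _ _, fun _ _ => hxy.cross_iff _ _⟩
  exact ⟨f, fun i => by simpa using hx (e i), fun j => by simpa using hy (e' j)⟩

theorem flip (h : X.IsHomogeneous) : X.flip.IsHomogeneous := by
  intro m n x x' y y' hxy
  obtain ⟨f, hx, hy⟩ := h n m y y' x x'
    ⟨hxy.eq_right, hxy.eq_left, hxy.right_iff, hxy.left_iff, fun i j => hxy.cross_iff j i⟩
  exact ⟨f.flip, hy, hx⟩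

theorem compl (h : X.IsHomogeneous) : X.compl.IsHomogeneous := by
  intro m n x x' y y' hxy
  obtain ⟨f, hx, hy⟩ := h m n x x' y y'
    ⟨hxy.eq_left, hxy.eq_right, hxy.left_iff, hxy.right_iff,
      fun i j => not_iff_not.1 (hxy.cross_iff i j)⟩
  exact ⟨f.compl, hx, hy⟩

theorem exists_aut_left_tuple (h : X.IsHomogeneous) {ι : Type*} [Finite ι] {x x' : ι → R}
    (hx : Function.Injective x) (hx' : Function.Injective x')
    (hrel : ∀ i j, X.left (x i) (x j) ↔ X.left (x' i) (x' j)) :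
    ∃ f : X.Aut, ∀ i, f.onLeft (x i) = x' i := by
  obtain ⟨f, hf, -⟩ := h.exists_aut (y := Empty.elim) (y' := Empty.elim)
    ⟨fun i j => by rw [hx.eq_iff, hx'.eq_iff], nofun, hrel, nofun, nofun⟩
  exact ⟨f, hf⟩

theorem exists_aut_left (h : X.IsHomogeneous) (r r' : R) : ∃ f : X.Aut, f.onLeft r = r' := by
  obtain ⟨f, hf⟩ := h.exists_aut_left_tuple (x := fun _ : Unit => r) (x' := fun _ => r')
    (Function.injective_of_subsingleton _) (Function.injective_of_subsingleton _)
    fun _ _ => iff_of_true (X.left.refl _) (X.left.refl _)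
  exact ⟨f, hf ()⟩

theorem exists_aut_left_pair (h : X.IsHomogeneous) {r₁ r₂ r₁' r₂' : R} (hne : r₁ ≠ r₂)
    (hne' : r₁' ≠ r₂') (hrel : X.left r₁ r₂ ↔ X.left r₁' r₂') :
    ∃ f : X.Aut, f.onLeft r₁ = r₁' ∧ f.onLeft r₂ = r₂' := by
  obtain ⟨f, hf⟩ := h.exists_aut_left_tuple (x := ![r₁, r₂]) (x' := ![r₁', r₂'])
    (by simpa [Function.Injective] using ⟨hne, hne.symm⟩)
    (by simpa [Function.Injective] using ⟨hne', hne'.symm⟩)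
    (by simp [hrel, X.left.comm' (x := r₂), X.left.comm' (x := r₂')])
  exact ⟨f, hf 0, hf 1⟩

theorem exists_aut_left_triple (h : X.IsHomogeneous) {x y z x' y' z' : R}
    (hxy : x ≠ y) (hxz : x ≠ z) (hyz : y ≠ z) (hsy : X.left x y) (hsz : X.left x z)
    (hxy' : x' ≠ y') (hxz' : x' ≠ z') (hyz' : y' ≠ z') (hsy' : X.left x' y')
    (hsz' : X.left x' z') :
    ∃ f : X.Aut, f.onLeft x = x' ∧ f.onLeft y = y' ∧ f.onLeft z = z' := by
  have hsame {a b c : R} (hab : X.left a b) (hac : X.left a c) (i j : Fin 3) :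
      X.left (![a, b, c] i) (![a, b, c] j) := by
    have (i : Fin 3) : X.left a (![a, b, c] i) := by
      fin_cases i <;> simp [hab, hac]
    exact X.left.trans (X.left.symm (this i)) (this j)
  obtain ⟨f, hf⟩ := h.exists_aut_left_tuple (x := ![x, y, z]) (x' := ![x', y', z'])
    (by intro i j hij; fin_cases i <;> fin_cases j <;> simp_all)
    (by intro i j hij; fin_cases i <;> fin_cases j <;> simp_all)
    fun i j => iff_of_true (hsame hsy hsz i j) (hsame hsy' hsz' i j)
  exact ⟨f, hf 0, hf 1, hf 2⟩

theorem exists_aut_left_edges (h : X.IsHomogeneous) {x y z w x' y' z' w' : R}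
    (hxy : x ≠ y) (hzw : z ≠ w) (hsxy : X.left x y) (hszw : X.left z w) (hsxz : ¬ X.left x z)
    (hxy' : x' ≠ y') (hzw' : z' ≠ w') (hsxy' : X.left x' y') (hszw' : X.left z' w')
    (hsxz' : ¬ X.left x' z') :
    ∃ f : X.Aut, f.onLeft x = x' ∧ f.onLeft y = y' ∧ f.onLeft z = z' ∧ f.onLeft w = w' := by
  have hrel {a b c d : R} (hab : X.left a b) (hcd : X.left c d) (hac : ¬ X.left a c)
      (p q : Fin 2 ⊕ Fin 2) :
      X.left (Sum.elim ![a, b] ![c, d] p) (Sum.elim ![a, b] ![c, d] q) ↔ p.isLeft = q.isLeft := by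
    have hb : ∀ i, X.left a (![a, b] i) := by simp [Fin.forall_fin_two, hab]
    have hd : ∀ i, X.left c (![c, d] i) := by simp [Fin.forall_fin_two, hcd]
    have hbd (i j) : ¬ X.left (![a, b] i) (![c, d] j) := fun hij =>
      hac (X.left.trans (X.left.trans (hb i) hij) (X.left.symm (hd j)))
    rcases p with i | i <;> rcases q with j | j
    · exact iff_of_true (X.left.trans (X.left.symm (hb i)) (hb j)) rfl
    · exact iff_of_false (hbd i j) nofun
    · exact iff_of_false (fun hij => hbd j i (X.left.symm hij)) nofun
    · exact iff_of_true (X.left.trans (X.left.symm (hd i)) (hd j)) rfl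
  have hinj {a b c d : R} (hab : X.left a b) (hcd : X.left c d) (hac : ¬ X.left a c)
      (hne : a ≠ b) (hne' : c ≠ d) : Function.Injective (Sum.elim ![a, b] ![c, d]) :=
    Function.Injective.sumElim (by simpa [Function.Injective] using ⟨hne, hne.symm⟩)
      (by simpa [Function.Injective] using ⟨hne', hne'.symm⟩) fun i j hij => by
        simpa [hij, X.left.refl] using hrel hab hcd hac (.inl i) (.inr j)
  obtain ⟨f, hf⟩ := h.exists_aut_left_tuple (hinj hsxy hszw hsxz hxy hzw)
    (hinj hsxy' hszw' hsxz' hxy' hzw')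
    fun p q => by rw [hrel hsxy hszw hsxz, hrel hsxy' hszw' hsxz']
  exact ⟨f, hf (.inl 0), hf (.inl 1), hf (.inr 0), hf (.inr 1)⟩

theorem exists_aut_cross (h : X.IsHomogeneous) {r r' : R} {b b' : B}
    (hE : X.cross r b ↔ X.cross r' b') :
    ∃ f : X.Aut, f.onLeft r = r' ∧ f.onRight b = b' := by
  obtain ⟨f, hx, hy⟩ := h.exists_aut (x := fun _ : Unit => r) (x' := fun _ => r')
    (y := fun _ : Unit => b) (y' := fun _ => b')
    ⟨by simp, by simp, fun _ _ => iff_of_true (X.left.refl _) (X.left.refl _),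
      fun _ _ => iff_of_true (X.right.refl _) (X.right.refl _), fun _ _ => hE⟩
  exact ⟨f, hx (), hy ()⟩

theorem exists_aut_left_right_pair (h : X.IsHomogeneous) {r r' : R} {b₁ b₂ b₁' b₂' : B}
    (hne : b₁ ≠ b₂) (hne' : b₁' ≠ b₂') (hrel : X.right b₁ b₂ ↔ X.right b₁' b₂')
    (h₁ : X.cross r b₁ ↔ X.cross r' b₁') (h₂ : X.cross r b₂ ↔ X.cross r' b₂') :
    ∃ f : X.Aut, f.onLeft r = r' ∧ f.onRight b₁ = b₁' ∧ f.onRight b₂ = b₂' := by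
  obtain ⟨f, hx, hy⟩ := h.exists_aut (x := fun _ : Unit => r) (x' := fun _ => r')
    (y := ![b₁, b₂]) (y' := ![b₁', b₂'])
    ⟨by simp, by simp [hne, hne', hne.symm, hne'.symm],
      fun _ _ => iff_of_true (X.left.refl _) (X.left.refl _),
      by simp [hrel, X.right.comm' (x := b₂), X.right.comm' (x := b₂')], by simp [h₁, h₂]⟩
  exact ⟨f, hx (), hy 0, hy 1⟩

end IsHomogeneous

/-! ### Basic structures -/

/-- The properties of a basic CUH graph: it is ultrahomogeneous and infinite, has no two adjacent
twins of the same color (it is not a blow-up), and has at least two cliques of each color. -/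
structure IsBasic (X : CliquePair R B) : Prop where
  homogeneous : X.IsHomogeneous
  infinite : Infinite R ∨ Infinite B
  twin_left : ∀ r r', X.left r r' → (∀ b, X.cross r b ↔ X.cross r' b) → r = r'
  twin_right : ∀ b b', X.right b b' → (∀ r, X.cross r b ↔ X.cross r b') → b = b'
  two_left : ∃ r r', ¬ X.left r r'
  two_right : ∃ b b', ¬ X.right b b'

/-- Some two left vertices are adjacent. -/
def HasLeftEdge (X : CliquePair R B) : Prop :=
  ∃ r r', r ≠ r' ∧ X.left r r'

theorem eq_of_left (hX : ¬ X.HasLeftEdge) {r r' : R} (hr : X.left r r') : r = r' := by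
  by_contra hne
  exact hX ⟨r, r', hne, hr⟩

theorem eq_of_right (hX : ¬ X.flip.HasLeftEdge) {b b' : B} (hb : X.right b b') : b = b' :=
  eq_of_left hX hb

theorem ne_of_not_left {r r' : R} (h : ¬ X.left r r') : r ≠ r' :=
  fun hrr' => h (hrr' ▸ X.left.refl r)

theorem ne_of_not_right {b b' : B} (h : ¬ X.right b b') : b ≠ b' :=
  fun hbb' => h (hbb' ▸ X.right.refl b)

namespace IsBasic

theorem flip (h : X.IsBasic) : X.flip.IsBasic :=
  ⟨h.homogeneous.flip, h.infinite.symm, h.twin_right, h.twin_left, h.two_right, h.two_left⟩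

theorem compl (h : X.IsBasic) : X.compl.IsBasic :=
  ⟨h.homogeneous.compl, h.infinite,
    fun r r' hr hb => h.twin_left r r' hr fun b => not_iff_not.1 (hb b),
    fun b b' hb hr => h.twin_right b b' hb fun r => not_iff_not.1 (hr r),
    h.two_left, h.two_right⟩

theorem exists_not_left (h : X.IsBasic) (r : R) : ∃ r', ¬ X.left r r' := by
  by_contra! hall
  obtain ⟨x, y, hxy⟩ := h.two_left
  exact hxy (X.left.trans (X.left.symm (hall x)) (hall y))

theorem exists_ne_left (h : X.IsBasic) (hedge : X.HasLeftEdge) (r : R) :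
    ∃ r', r ≠ r' ∧ X.left r r' := by
  obtain ⟨x, y, hxy, hs⟩ := hedge
  obtain ⟨f, rfl⟩ := h.homogeneous.exists_aut_left x r
  exact ⟨f.onLeft y, by simpa using hxy, f.left_iff.2 hs⟩

theorem exists_cross_not_cross (h : X.IsBasic) {r r' : R} (hne : r ≠ r') (hs : X.left r r') :
    ∃ b, X.cross r b ∧ ¬ X.cross r' b := by
  obtain ⟨x, y, b, hxy, hxb, hyb⟩ : ∃ x y b, X.left x y ∧ X.cross x b ∧ ¬ X.cross y b := by
    by_contra! hall
    exact hne (h.twin_left r r' hs fun b => ⟨hall r r' b hs, hall r' r b (X.left.symm hs)⟩)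
  obtain ⟨f, rfl, rfl⟩ := h.homogeneous.exists_aut_left_pair (fun hc : x = y => hyb (hc ▸ hxb))
    hne (iff_of_true hxy hs)
  exact ⟨f.onRight b, f.cross_iff.2 hxb, fun hc => hyb (f.cross_iff.1 hc)⟩

theorem exists_left_cross (h : X.IsBasic) (hedge : X.HasLeftEdge) (r : R) (b : B) :
    ∃ r', X.left r r' ∧ X.cross r' b := by
  by_cases hrb : X.cross r b
  · exact ⟨r, X.left.refl r, hrb⟩
  obtain ⟨x, y, hne, hxy⟩ := hedge
  obtain ⟨c, hxc, hyc⟩ := h.exists_cross_not_cross hne hxy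
  obtain ⟨f, rfl, rfl⟩ := h.homogeneous.exists_aut_cross (iff_of_false hyc hrb)
  exact ⟨f.onLeft x, f.left_iff.2 (X.left.symm hxy), f.cross_iff.2 hxc⟩

theorem exists_left_not_cross (h : X.IsBasic) (hedge : X.HasLeftEdge) (r : R) (b : B) :
    ∃ r', X.left r r' ∧ ¬ X.cross r' b :=
  h.compl.exists_left_cross hedge r b

theorem exists_left_cross_iff (h : X.IsBasic) (hedge : X.HasLeftEdge) (r : R) (b : B) (p : Prop) :
    ∃ r', X.left r r' ∧ (X.cross r' b ↔ p) := by
  by_cases hp : p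
  · simpa [hp] using h.exists_left_cross hedge r b
  · simpa [hp] using h.exists_left_not_cross hedge r b

theorem exists_cross_cross_of_not_left (h : X.IsBasic) (hedge : X.HasLeftEdge) {r r' : R}
    (hs : ¬ X.left r r') (p p' : Prop) : ∃ b, (X.cross r b ↔ p) ∧ (X.cross r' b ↔ p') := by
  obtain ⟨b, -⟩ := h.two_right
  obtain ⟨x, hx, hxb⟩ := h.exists_left_cross_iff hedge r b p
  obtain ⟨y, hy, hyb⟩ := h.exists_left_cross_iff hedge r' b p'
  have hxy : ¬ X.left x y := fun hc =>
    hs (X.left.trans hx (X.left.trans hc (X.left.symm hy)))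
  obtain ⟨f, rfl, rfl⟩ := h.homogeneous.exists_aut_left_pair
    (ne_of_not_left hxy) (ne_of_not_left hs) (iff_of_false hxy hs)
  exact ⟨f.onRight b, f.cross_iff.trans hxb, f.cross_iff.trans hyb⟩

theorem exists_common_neighbor_of_not_left (h : X.IsBasic) (hedge : X.HasLeftEdge) {r r' : R}
    (hs : ¬ X.left r r') : ∃ b, X.cross r b ∧ X.cross r' b := by
  simpa using h.exists_cross_cross_of_not_left hedge hs True True

end IsBasic

/-! ### Omitting `D` -/

/-- No two left vertices of one clique and two right vertices of one clique span exactly three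
cross edges; equivalently, the 2-colored graph `D` is omitted. -/
def OmitsD (X : CliquePair R B) : Prop :=
  ∀ r r' b b', X.left r r' → X.right b b' → X.cross r b → X.cross r b' → X.cross r' b →
    X.cross r' b'

/-- Any two left vertices of one clique and two right vertices of one clique span an even number
of cross edges. -/
def IsBalanced (X : CliquePair R B) : Prop :=
  ∀ r r' b b', X.left r r' → X.right b b' →
    ((X.cross r b ↔ X.cross r b') ↔ (X.cross r' b ↔ X.cross r' b'))

theorem OmitsD.flip (h : X.OmitsD) : X.flip.OmitsD :=
  fun b b' r r' hb hr h₁ h₂ h₃ => h r r' b b' hr hb h₁ h₃ h₂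

namespace IsBalanced

theorem flip (h : X.IsBalanced) : X.flip.IsBalanced := by
  intro b b' r r' hb hr
  have := h r r' b b' hr hb
  simp only [flip_cross]
  tauto

theorem compl (h : X.IsBalanced) : X.compl.IsBalanced := by
  intro r r' b b' hr hb
  have := h r r' b b' hr hb
  simp only [compl_cross]
  tauto

theorem omitsD (h : X.IsBalanced) : X.OmitsD := by
  intro r r' b b' hr hb
  have := h r r' b b' hr hb
  tauto

theorem agree_iff (h : X.IsBalanced) {r r' : R} (hr : X.left r r') {b b' : B}
    (hb : X.right b b') :
    (X.cross r b ↔ X.cross r' b) ↔ (X.cross r b' ↔ X.cross r' b') := by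
  have := h r r' b b' hr hb
  tauto

end IsBalanced

theorem OmitsD.isBalanced (h : X.OmitsD) (h' : X.compl.OmitsD) : X.IsBalanced := by
  intro r r' b b' hr hb
  have hr' := X.left.symm hr
  have hb' := X.right.symm hb
  have three (x y c d) (hxy : X.left x y) (hcd : X.right c d) := h x y c d hxy hcd
  have one (x y c d) (hxy : X.left x y) (hcd : X.right c d) := h' x y c d hxy hcd
  simp only [compl_cross] at one
  have := three r r' b b' hr hb
  have := three r r' b' b hr hb'
  have := three r' r b b' hr' hb
  have := three r' r b' b hr' hb'
  have := one r r' b b' hr hb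
  have := one r r' b' b hr hb'
  have := one r' r b b' hr' hb
  have := one r' r b' b hr' hb'
  grind

namespace IsBasic

/-- An automorphism taking `c, c'` and a common non-neighbor of them to `b, b', r'` would take a
common neighbor of `c, c'` to a vertex that spans exactly three cross edges with `r, b, b'`. -/
theorem not_common_neighbor_of_single_edge (h : X.IsBasic) (hedge : X.HasLeftEdge)
    (hD : X.OmitsD) {r r' : R} {b b' : B} (hr : X.left r r') (hb : X.right b b')
    (h₁ : X.cross r b) (h₂ : ¬ X.cross r b') (h₃ : ¬ X.cross r' b) (h₄ : ¬ X.cross r' b')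
    {c c' : B} (hc : X.right c c') (hne : c ≠ c') (x : R) (hx : X.cross x c) :
    ¬ X.cross x c' := by
  intro hx'
  obtain ⟨y, hxy, hy⟩ := h.exists_left_not_cross hedge x c
  have hy' : ¬ X.cross y c' := fun hy' => hy (hD x y c' c hxy (X.right.symm hc) hx' hx hy')
  obtain ⟨f, rfl, rfl, rfl⟩ := h.homogeneous.exists_aut_left_right_pair hne
    (fun hb : b = b' => h₂ (hb ▸ h₁)) (iff_of_true hc hb) (iff_of_false hy h₃)
    (iff_of_false hy' h₄)
  exact h₂ (hD (f.onLeft x) r _ _ (X.left.trans (f.left_iff.2 hxy) (X.left.symm hr)) hb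
    (f.cross_iff.2 hx) (f.cross_iff.2 hx') h₁)

theorem not_single_edge (h : X.IsBasic) (hedge : X.HasLeftEdge) (hedge' : X.flip.HasLeftEdge)
    (hD : X.OmitsD) {r r' : R} {b b' : B} (hr : X.left r r') (hb : X.right b b')
    (h₁ : X.cross r b) (h₂ : ¬ X.cross r b') (h₃ : ¬ X.cross r' b) : X.cross r' b' := by
  by_contra h₄
  have unique {x x' : R} (hx : X.left x x') (hne : x ≠ x') (y : B) (hy : X.cross x y) :
      ¬ X.cross x' y :=
    h.flip.not_common_neighbor_of_single_edge hedge' hD.flip hb hr h₁ h₃ h₂ h₄ hx hne y hy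
  obtain ⟨r₃, hr₃, h₃b'⟩ := h.exists_left_cross hedge r b'
  have hr₃r : r₃ ≠ r := fun hc => h₂ (hc ▸ h₃b')
  have hr₃r' : r₃ ≠ r' := fun hc => h₄ (hc ▸ h₃b')
  have hrr' : r ≠ r' := fun hc => h₃ (hc ▸ h₁)
  obtain ⟨b₀, hb₀⟩ := h.flip.exists_not_left b
  obtain ⟨c₁, hc₁, hrc₁⟩ := h.flip.exists_left_cross hedge' b₀ r
  obtain ⟨c₂, hc₂, hrc₂⟩ := h.flip.exists_left_cross hedge' b₀ r₃
  have hbc {c : B} (hc : X.right b₀ c) : ¬ X.right b c := fun hbc =>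
    hb₀ (X.right.trans hbc (X.right.symm hc))
  -- An automorphism fixing `r'`, `b` and moving `c₁` to `c₂` fixes `r`, the only neighbor of `b`
  -- in its clique, so that `c₂` has two neighbors `r, r₃` in that clique.
  obtain ⟨f, hfr', hfb, rfl⟩ := h.homogeneous.exists_aut_left_right_pair (r := r') (r' := r')
    (b₁ := b) (b₂ := c₁) (b₁' := b) (b₂' := c₂) (ne_of_not_right (hbc hc₁))
    (ne_of_not_right (hbc hc₂)) (iff_of_false (hbc hc₁) (hbc hc₂)) Iff.rfl
    (iff_of_false (unique hr hrr' _ hrc₁)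
      (unique (X.left.trans (X.left.symm hr₃) hr) hr₃r' _ hrc₂))
  have hfr : f.onLeft r = r := by
    by_contra hne
    have hleft : X.left (f.onLeft r) r' := hfr' ▸ f.left_iff.2 hr
    refine unique (X.left.trans hleft (X.left.symm hr)) hne b ?_ h₁
    simpa [hfb] using f.cross_iff.2 h₁
  refine unique hr₃ hr₃r.symm (f.onRight c₁) ?_ hrc₂
  simpa [hfr] using f.cross_iff.2 hrc₁

theorem isBalanced (h : X.IsBasic) (hD : X.OmitsD) : X.IsBalanced := by
  by_cases hedge : X.HasLeftEdge
  · by_cases hedge' : X.flip.HasLeftEdge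
    · exact hD.isBalanced fun r r' b b' hr hb h₁ h₂ h₃ h₄ =>
        h₁ (h.not_single_edge hedge hedge' hD (X.left.symm hr) (X.right.symm hb) h₄ h₃ h₂)
    · intro r r' b b' _ hb
      simp [eq_of_right hedge' hb]
  · intro r r' b b' hr _
    rw [eq_of_left hedge hr]

end IsBasic

/-! ### Infinitely many cliques -/

/-- A balanced basic structure with a nontrivial left clique. -/
structure IsTame (X : CliquePair R B) : Prop extends X.IsBasic where
  hasLeftEdge : X.HasLeftEdge
  balanced : X.IsBalanced

/-- Some left clique has at least three vertices. -/
def HasLeftTriangle (X : CliquePair R B) : Prop :=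
  ∃ x y z, x ≠ y ∧ x ≠ z ∧ y ≠ z ∧ X.left x y ∧ X.left x z

/-- Some two adjacent left vertices have a common neighbor on the right; that is, the 2-colored
graph `T_r` is realized. -/
def RealizesTr (X : CliquePair R B) : Prop :=
  ∃ r r' b, r ≠ r' ∧ X.left r r' ∧ X.cross r b ∧ X.cross r' b

/-- The right cliques that meet `S`. -/
def rightCliques (X : CliquePair R B) (S : Set B) : Set (Quotient X.right) :=
  Quotient.mk X.right '' S

/-- The right vertices `y k` lie in pairwise different cliques. -/
def RightSeparated {κ : Type*} (X : CliquePair R B) (y : κ → B) : Prop :=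
  ∀ k k', X.right (y k) (y k') → k = k'

namespace RightSeparated

variable {κ : Type*} {y : κ → B}

theorem right_iff (h : X.RightSeparated y) {k k' : κ} : X.right (y k) (y k') ↔ k = k' :=
  ⟨h k k', fun hk => hk ▸ X.right.refl _⟩

theorem eq_iff (h : X.RightSeparated y) {k k' : κ} : y k = y k' ↔ k = k' :=
  ⟨fun hy => h k k' (hy ▸ X.right.refl _), fun hk => hk ▸ rfl⟩

end RightSeparated

theorem exists_rightSeparated {κ : Type*} [Finite κ] {S : Set B}
    (hS : (X.rightCliques S).Infinite) : ∃ y : κ → B, X.RightSeparated y ∧ ∀ k, y k ∈ S := by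
  obtain ⟨q, hq, hqS⟩ := exists_injective_mem_of_infinite (ι := κ) hS
  choose y hyS hyq using hqS
  refine ⟨y, fun k k' hk => hq ?_, hyS⟩
  rw [← hyq, ← hyq]
  exact Quotient.sound hk

theorem IsBasic.exists_agree_not_agree (h : X.IsBasic) (hT : X.HasLeftTriangle) {x y z w : R}
    (hxy : x ≠ y) (hzw : z ≠ w) (hsxy : X.left x y) (hszw : X.left z w) (hsxz : ¬ X.left x z) :
    ∃ b, (X.cross x b ↔ X.cross y b) ∧ ¬ (X.cross z b ↔ X.cross w b) := by
  obtain ⟨r₁, r₂, r₃, h₁₂, h₁₃, h₂₃, hs₁₂, hs₁₃⟩ := hT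
  have hedge : X.HasLeftEdge := ⟨r₁, r₂, h₁₂, hs₁₂⟩
  obtain ⟨b, -⟩ := h.two_right
  obtain ⟨a, a', hne, hs, hagree⟩ :
      ∃ a a', a ≠ a' ∧ X.left a a' ∧ (X.cross a b ↔ X.cross a' b) := by
    by_cases e₁₂ : X.cross r₁ b ↔ X.cross r₂ b
    · exact ⟨_, _, h₁₂, hs₁₂, e₁₂⟩
    by_cases e₁₃ : X.cross r₁ b ↔ X.cross r₃ b
    · exact ⟨_, _, h₁₃, hs₁₃, e₁₃⟩
    exact ⟨_, _, h₂₃, X.left.trans (X.left.symm hs₁₂) hs₁₃, by tauto⟩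
  obtain ⟨c, hc⟩ := h.exists_not_left a
  obtain ⟨u, hu, hub⟩ := h.exists_left_cross hedge c b
  obtain ⟨v, hv, hvb⟩ := h.exists_left_not_cross hedge c b
  obtain ⟨f, rfl, rfl, rfl, rfl⟩ := h.homogeneous.exists_aut_left_edges hne
    (fun huv : u = v => hvb (huv ▸ hub)) hs (X.left.trans (X.left.symm hu) hv)
    (fun hau => hc (X.left.trans hau (X.left.symm hu))) hxy hzw hsxy hszw hsxz
  exact ⟨f.onRight b, by simp only [f.cross_iff, hagree], by simp [f.cross_iff, hub, hvb]⟩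

theorem IsBasic.infinite_left_of_finite_quotient (h : X.IsBasic) [Finite (Quotient X.right)] :
    Infinite R := by
  by_contra hR
  have : Finite R := not_infinite_iff_finite.1 hR
  have : Infinite B := h.infinite.resolve_left hR
  obtain ⟨b, b', hne, hbb'⟩ := Finite.exists_ne_map_eq_of_infinite
    fun b : B => ((Quotient.mk X.right b, {r | X.cross r b}) : Quotient X.right × Set R)
  rw [Prod.mk.injEq] at hbb'
  exact hne (h.twin_right b b' (Quotient.exact hbb'.1) (Set.ext_iff.1 hbb'.2))

namespace IsTame

theorem compl (h : X.IsTame) : X.compl.IsTame :=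
  ⟨h.toIsBasic.compl, h.hasLeftEdge, h.balanced.compl⟩

theorem flip (h : X.IsTame) (hedge : X.flip.HasLeftEdge) : X.flip.IsTame :=
  ⟨h.toIsBasic.flip, hedge, h.balanced.flip⟩

theorem hasLeftTriangle (h : X.IsTame) (hT : X.RealizesTr) : X.HasLeftTriangle := by
  obtain ⟨x, y, b, hne, hs, hx, hy⟩ := hT
  obtain ⟨z, hz, hzb⟩ := h.exists_left_not_cross h.hasLeftEdge x b
  exact ⟨x, y, z, hne, fun hc => hzb (hc ▸ hx), fun hc => hzb (hc ▸ hy), hs, hz⟩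

/-- Choose a partner `φ r` of each left vertex `r` in its clique. If there are only finitely many
right cliques, then two left vertices `r, r'` and their partners have the same neighbors among
fixed representatives of the right cliques, hence by balance the pairs `(r, φ r)` and
`(r', φ r')` agree on the same right vertices. -/
theorem infinite_quotient_right (h : X.IsTame)
    (hbig : X.HasLeftTriangle ∨ ¬ X.flip.HasLeftEdge) : Infinite (Quotient X.right) := by
  by_contra hfin
  have : Finite (Quotient X.right) := not_infinite_iff_finite.1 hfin
  have hout (b : B) : X.right (Quotient.mk X.right b).out b := Quotient.mk_out b
  have : Infinite R := h.infinite_left_of_finite_quotient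
  choose φ hφ hsφ using h.exists_ne_left h.hasLeftEdge
  obtain ⟨r, r', hne, hr⟩ := Finite.exists_ne_map_eq_of_infinite
    fun r : R => (({q | X.cross r q.out}, {q | X.cross (φ r) q.out}) :
      Set (Quotient X.right) × Set (Quotient X.right))
  simp only [Prod.mk.injEq, Set.ext_iff, Set.mem_ofPred_eq] at hr
  obtain ⟨hr, hφr⟩ := hr
  by_cases hs : X.left r r'
  · exact hne (h.twin_left r r' hs fun b => (h.balanced.agree_iff hs (hout b)).1 (hr _))
  rcases hbig with hT | ht
  · obtain ⟨b, hb, hb'⟩ :=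
      h.exists_agree_not_agree hT (hφ r) (hφ r') (hsφ r) (hsφ r') hs
    have hrep := (h.balanced.agree_iff (hsφ r) (hout b)).2 hb
    have hrep' := (hr _).symm.trans (hrep.trans (hφr _))
    exact hb' ((h.balanced.agree_iff (hsφ r') (hout b)).1 hrep')
  · obtain ⟨b, hb, hb'⟩ := h.exists_cross_cross_of_not_left h.hasLeftEdge hs True False
    have := hr (Quotient.mk X.right b)
    rw [eq_of_right ht (hout b)] at this
    exact hb'.1 (this.1 (hb.2 trivial))

end IsTame

theorem IsBasic.exists_common_neighbor (h : X.IsBasic) (hT : X.RealizesTr) (r r' : R) :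
    ∃ b, X.cross r b ∧ X.cross r' b := by
  obtain ⟨x, y, b, hne, hxy, hx, hy⟩ := hT
  have hcommon {r r' : R} (hne' : r ≠ r') (hr : X.left r r') :
      ∃ b, X.cross r b ∧ X.cross r' b := by
    obtain ⟨f, rfl, rfl⟩ := h.homogeneous.exists_aut_left_pair hne hne' (iff_of_true hxy hr)
    exact ⟨f.onRight b, f.cross_iff.2 hx, f.cross_iff.2 hy⟩
  by_cases hr : X.left r r'
  · rcases eq_or_ne r r' with rfl | hne'
    · obtain ⟨r', hne', hr'⟩ := h.exists_ne_left ⟨x, y, hne, hxy⟩ r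
      exact (hcommon hne' hr').imp fun b hb => ⟨hb.1, hb.1⟩
    · exact hcommon hne' hr
  · exact h.exists_common_neighbor_of_not_left ⟨x, y, hne, hxy⟩ hr

/-! ### Infinite cliques and neighborhoods -/

namespace IsTame

/-- In a finite left clique, two vertices `b, b'` of different right cliques have the same
neighbors; by homogeneity then so do `b` and any `b₂` outside the clique of `b` with a common
neighbor of `b` and `b₂` in the left clique. -/
theorem infinite_left_clique (h : X.IsTame) (hT : X.RealizesTr) (r : R) :
    {r' | X.left r r'}.Infinite := by
  intro hfin
  have : Finite {r' | X.left r r'} := hfin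
  have : Infinite (Quotient X.right) := h.infinite_quotient_right (.inl (h.hasLeftTriangle hT))
  obtain ⟨b, b', hbb', hagree⟩ :
      ∃ b b', ¬ X.right b b' ∧ ∀ u, X.left r u → (X.cross u b ↔ X.cross u b') := by
    obtain ⟨q, q', hne, hq⟩ := Finite.exists_ne_map_eq_of_infinite
      fun q : Quotient X.right => {k : {r' | X.left r r'} | X.cross k q.out}
    exact ⟨q.out, q'.out, fun hc => hne (Quotient.out_equiv_out.1 hc),
      fun u hu => Set.ext_iff.1 hq ⟨u, hu⟩⟩
  obtain ⟨a, ha, hab⟩ := h.exists_left_cross h.hasLeftEdge r b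
  obtain ⟨w, hw, hwb⟩ := h.exists_left_not_cross h.hasLeftEdge r b
  obtain ⟨b₂, hab₂, hwb₂⟩ := h.exists_common_neighbor hT a w
  have hbb₂ : ¬ X.right b b₂ := fun hc => by
    have := h.balanced a w b b₂ (X.left.trans (X.left.symm ha) hw) hc
    tauto
  obtain ⟨f, hfa, hfb, rfl⟩ := h.homogeneous.exists_aut_left_right_pair (r := a) (r' := a)
    (ne_of_not_right hbb') (ne_of_not_right hbb₂) (iff_of_false hbb' hbb₂) Iff.rfl
    (iff_of_true ((hagree a ha).1 hab) hab₂)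
  obtain ⟨v, rfl⟩ := f.onLeft.surjective w
  have hv : X.left r v :=
    X.left.trans ha (f.left_iff.1 (hfa.symm ▸ X.left.trans (X.left.symm ha) hw))
  refine hwb ?_
  rw [← hfb, f.cross_iff, hagree v hv, ← f.cross_iff]
  exact hwb₂

theorem exists_aut_left_disjoint (h : X.IsTame) (hT : X.RealizesTr) {P : Set R} (hP : P.Finite)
    {ρ : R} (hρ : ∀ u ∈ P, X.left ρ u) :
    ∃ f : X.Aut, ∀ u ∈ P, X.left ρ (f.onLeft u) ∧ f.onLeft u ∉ P := by
  have : Finite P := hP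
  obtain ⟨g, hg, hgP⟩ := exists_injective_mem_of_infinite (ι := P)
    ((h.infinite_left_clique hT ρ).sdiff hP)
  obtain ⟨f, hf⟩ := h.homogeneous.exists_aut_left_tuple (x := ((↑) : P → R))
    Subtype.val_injective hg fun u v => iff_of_true
      (X.left.trans (X.left.symm (hρ u u.2)) (hρ v v.2))
      (X.left.trans (X.left.symm (hgP u).1) (hgP v).1)
  exact ⟨f, fun u hu => hf ⟨u, hu⟩ ▸ hgP ⟨u, hu⟩⟩

/-- If the clique `K` contains only finitely many neighbors of `b`, these can be moved within `K`
away from themselves, so some `b'` has no common neighbor with `b` in `K`; but then by homogeneity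
no vertex `b₂` outside the clique of `b` has both a common neighbor with `b` in `K` and a neighbor
in `K` that is not adjacent to `b`. -/
theorem infinite_left_neighbors (h : X.IsTame) (hT : X.RealizesTr) (r : R) (b : B) :
    {r' | X.left r r' ∧ X.cross r' b}.Infinite := by
  intro hfin
  obtain ⟨ρ, hρ, hρb⟩ := h.exists_left_cross h.hasLeftEdge r b
  obtain ⟨w, hw, hwb⟩ := h.exists_left_not_cross h.hasLeftEdge ρ b
  set P : Set R := {r' | X.left r r' ∧ X.cross r' b}
  have hρP : ρ ∈ P := ⟨hρ, hρb⟩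
  obtain ⟨f, hf⟩ := h.exists_aut_left_disjoint hT (ρ := ρ) hfin fun u hu =>
    X.left.trans (X.left.symm hρ) hu.1
  have mem_image (u : R) (hu : X.left ρ u) (hub : X.cross u (f.onRight b)) :
      u ∈ f.onLeft '' P := by
    obtain ⟨v, rfl⟩ := f.onLeft.surjective u
    have hv := f.left_iff.1 (X.left.trans (X.left.symm (hf ρ hρP).1) hu)
    exact ⟨v, ⟨X.left.trans hρ hv, f.cross_iff.1 hub⟩, rfl⟩
  have disjoint (u : R) (hu : X.left ρ u) (hub : X.cross u b) : ¬ X.cross u (f.onRight b) := by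
    intro hub'
    obtain ⟨v, hv, rfl⟩ := mem_image u hu hub'
    exact (hf v hv).2 ⟨X.left.trans hρ hu, hub⟩
  have hbfb : ¬ X.right b (f.onRight b) := by
    intro hc
    obtain ⟨u, hu, huP⟩ :=
      ((h.infinite_left_clique hT ρ).sdiff (hfin.union (hfin.image f.onLeft))).nonempty
    have hub : ¬ X.cross u b := fun hub => huP (.inl ⟨X.left.trans hρ hu, hub⟩)
    have hufb : ¬ X.cross u (f.onRight b) := fun hub => huP (.inr (mem_image u hu hub))
    have := h.balanced ρ u b (f.onRight b) hu hc
    have := disjoint ρ (X.left.refl ρ) hρb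
    tauto
  obtain ⟨b₂, hρb₂, hwb₂⟩ := h.exists_common_neighbor hT ρ w
  have hbb₂ : ¬ X.right b b₂ := fun hc => by
    have := h.balanced ρ w b b₂ hw hc
    tauto
  have hfρ := (hf ρ hρP).1
  have hfρb : ¬ X.cross (f.onLeft ρ) b := fun hc => (hf ρ hρP).2 ⟨X.left.trans hρ hfρ, hc⟩
  obtain ⟨g, hgw, hgb, hgb₂⟩ := h.homogeneous.exists_aut_left_right_pair
    (ne_of_not_right hbb₂) (ne_of_not_right hbfb) (iff_of_false hbb₂ hbfb)
    (iff_of_false hwb hfρb) (iff_of_true hwb₂ (f.cross_iff.2 hρb))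
  refine disjoint (g.onLeft ρ) (X.left.trans hfρ (X.left.symm (hgw ▸ g.left_iff.2 hw))) ?_ ?_
  · rwa [← hgb, g.cross_iff]
  · rwa [← hgb₂, g.cross_iff]

end IsTame

/-! ### Infinitely many cliques in a neighborhood -/

/-- If a vertex `r₁` has neighbors in only finitely many of the right cliques that contain a
vertex of prescribed adjacency to `F`, then these cliques can be moved away from themselves. -/
theorem IsHomogeneous.exists_aut_disjoint_neighbors (h : X.IsHomogeneous) (F : Finset R) (p : Prop)
    (hinf : (X.rightCliques {b | ∀ r ∈ F, (X.cross r b ↔ p)}).Infinite) {r₁ : R}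
    (hfin : (X.rightCliques {b | (∀ r ∈ F, (X.cross r b ↔ p)) ∧ X.cross r₁ b}).Finite) :
    ∃ f : X.Aut, (∀ r ∈ F, f.onLeft r = r) ∧
      ∀ b, (∀ r ∈ F, (X.cross r b ↔ p)) → X.cross (f.onLeft r₁) b → ¬ X.cross r₁ b := by
  set Q := X.rightCliques {b | (∀ r ∈ F, (X.cross r b ↔ p)) ∧ X.cross r₁ b}
  have : Finite Q := hfin
  choose c hc hcq using fun q : Q => q.2
  have hcsep : X.RightSeparated c := fun q q' hqq' =>
    Subtype.ext <| by rw [← hcq, ← hcq]; exact Quotient.sound hqq'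
  obtain ⟨d, hdsep, hd⟩ := exists_rightSeparated (κ := Q)
    (S := {b | (∀ r ∈ F, (X.cross r b ↔ p)) ∧ Quotient.mk X.right b ∉ Q}) <|
    (hinf.sdiff hfin).mono <| by
      rintro _ ⟨⟨b, hb, rfl⟩, hbQ⟩
      exact ⟨b, ⟨hb, hbQ⟩, rfl⟩
  obtain ⟨f, hfF, hf⟩ := h.exists_aut (x := ((↑) : F → R)) (x' := (↑)) (y := c) (y' := d)
    ⟨fun _ _ => Iff.rfl, fun q q' => by rw [hcsep.eq_iff, hdsep.eq_iff], fun _ _ => Iff.rfl,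
      fun q q' => by rw [hcsep.right_iff, hdsep.right_iff],
      fun r q => by rw [(hc q).1 r r.2, (hd q).1 r r.2]⟩
  refine ⟨f, fun r hr => hfF ⟨r, hr⟩, fun b hb hfb hr₁b => ?_⟩
  obtain ⟨b, rfl⟩ := f.onRight.surjective b
  have hbQ : Quotient.mk X.right b ∈ Q := by
    refine ⟨b, ⟨fun r hr => ?_, f.cross_iff.1 hfb⟩, rfl⟩
    rw [← hb r hr, ← f.cross_iff (r := r), hfF ⟨r, hr⟩]
  have hbd : X.right (f.onRight b) (d ⟨_, hbQ⟩) :=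
    hf _ ▸ f.right_iff.2 (X.right.symm (Quotient.exact (hcq ⟨_, hbQ⟩)))
  exact (hd ⟨_, hbQ⟩).2 ⟨f.onRight b, ⟨hb, hr₁b⟩, Quotient.sound hbd⟩

instance [Infinite (Quotient X.right)] : Infinite (Quotient X.compl.right) :=
  ‹Infinite (Quotient X.right)›

theorem rightCliques_univ : X.rightCliques Set.univ = Set.univ :=
  Set.image_univ_of_surjective Quotient.mk_surjective

namespace IsTame

/-- If neighborhoods are finite, then they can be moved away from themselves, so adjacent left
vertices have no common neighbor. The vertices of a clique not containing `r` then have different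
common neighbors with `r`, so they are finitely many, but their neighborhoods cover `B`. -/
theorem infinite_rightCliques_neighbors_of_not_hasLeftEdge_flip (h : X.IsTame)
    (hedge : ¬ X.flip.HasLeftEdge) [Infinite (Quotient X.right)] (r : R) :
    (X.rightCliques {b | X.cross r b}).Infinite := by
  intro hfin
  have hmk : Function.Injective (Quotient.mk X.right) := fun b b' hbb' =>
    eq_of_right hedge (Quotient.exact hbb')
  have hN (x : R) : {b | X.cross x b}.Finite := by
    obtain ⟨f, rfl⟩ := h.homogeneous.exists_aut_left r x
    refine ((hfin.of_finite_image hmk.injOn).image f.onRight).subset fun b hb => ?_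
    obtain ⟨b, rfl⟩ := f.onRight.surjective b
    exact ⟨b, f.cross_iff.1 hb, rfl⟩
  obtain ⟨r₀, hr₀⟩ := h.exists_not_left r
  obtain ⟨b₁, hb₁, -⟩ := h.exists_common_neighbor_of_not_left h.hasLeftEdge hr₀
  obtain ⟨f, -, hf⟩ := h.homogeneous.exists_aut_disjoint_neighbors ∅ True (r₁ := r)
    (by simpa [rightCliques_univ] using Set.infinite_univ) (by simpa using hfin)
  have hsf : X.left r (f.onLeft r) := by
    by_contra hs
    obtain ⟨b, hb, hb'⟩ := h.exists_common_neighbor_of_not_left h.hasLeftEdge hs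
    exact hf b (by simp) hb' hb
  have disjoint {x x' : R} (hs : X.left x x') {b : B} (hb : X.cross x b) (hb' : X.cross x' b) :
      x = x' := by
    by_contra hne
    obtain ⟨g, hgx, hgx'⟩ := h.homogeneous.exists_aut_left_pair hne
      (fun hc : r = f.onLeft r => hf b₁ (by simp) (hc ▸ hb₁) hb₁) (iff_of_true hs hsf)
    refine hf (g.onRight b) (by simp) (hgx' ▸ g.cross_iff.2 hb') (hgx ▸ g.cross_iff.2 hb)
  have hK : {x | X.left r₀ x}.Finite := by
    have hcommon (x : {x | X.left r₀ x}) : ∃ b, X.cross r b ∧ X.cross x b :=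
      h.exists_common_neighbor_of_not_left h.hasLeftEdge fun hrx =>
        hr₀ (X.left.trans hrx (X.left.symm x.2))
    choose g hgr hg using hcommon
    have : Finite {b | X.cross r b} := hN r
    exact Finite.of_injective (fun x => (⟨g x, hgr x⟩ : {b | X.cross r b})) fun x x' hxx' =>
      Subtype.ext <| disjoint (X.left.trans (X.left.symm x.2) x'.2) (hg x) <| by
        rw [show g x = g x' from congrArg Subtype.val hxx']
        exact hg x'
  refine Set.infinite_univ (α := Quotient X.right) (rightCliques_univ ▸
    ((hK.biUnion fun x _ => hN x).subset fun b _ => ?_).image _)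
  obtain ⟨x, hx, hxb⟩ := h.exists_left_cross h.hasLeftEdge r₀ b
  exact Set.mem_biUnion hx hxb

theorem infinite_rightCliques_neighbors (h : X.IsTame) [Infinite (Quotient X.right)] (r : R) :
    (X.rightCliques {b | X.cross r b}).Infinite := by
  by_cases hedge : X.flip.HasLeftEdge
  · suffices X.rightCliques {b | X.cross r b} = Set.univ from this ▸ Set.infinite_univ
    refine Set.eq_univ_of_forall fun q => ?_
    obtain ⟨b, hb, hrb⟩ := (h.flip hedge).exists_left_cross hedge q.out r
    exact ⟨b, hrb, by rw [← Quotient.out_eq q]; exact Quotient.sound (X.right.symm hb)⟩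
  · exact h.infinite_rightCliques_neighbors_of_not_hasLeftEdge_flip hedge r

theorem exists_forall_cross (h : X.IsTame) (hT : X.RealizesTr) (F : Finset R)
    (hF : ∀ r ∈ F, ∀ r' ∈ F, X.left r r') : ∃ b, ∀ r ∈ F, X.cross r b := by
  obtain ⟨b, -⟩ := h.two_right
  rcases F.eq_empty_or_nonempty with rfl | ⟨r, -⟩
  · exact ⟨b, by simp⟩
  obtain ⟨g, hg, hgb⟩ := exists_injective_mem_of_infinite (ι := F)
    (h.infinite_left_neighbors hT r b)
  obtain ⟨f, hf⟩ := h.homogeneous.exists_aut_left_tuple hg Subtype.val_injective fun u v =>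
    iff_of_true (X.left.trans (X.left.symm (hgb u).1) (hgb v).1) (hF u u.2 v v.2)
  refine ⟨f.onRight b, fun r hr => ?_⟩
  have := f.cross_iff.2 (hgb ⟨r, hr⟩).2
  rwa [hf] at this

theorem infinite_rightCliques_common_neighbors (h : X.IsTame) (hT : X.RealizesTr) {F : Finset R}
    (hne : F.Nonempty) (hF : ∀ r ∈ F, ∀ r' ∈ F, X.left r r') :
    (X.rightCliques {b | ∀ r ∈ F, X.cross r b}).Infinite := by
  have : Infinite (Quotient X.right) := h.infinite_quotient_right (.inl (h.hasLeftTriangle hT))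
  classical
  induction hne using Finset.Nonempty.cons_induction with
  | singleton r => simpa using h.infinite_rightCliques_neighbors r
  | cons r F hr hne ih =>
    intro hfin
    simp only [Finset.mem_cons, forall_eq_or_imp] at hF hfin
    obtain ⟨⟨-, hrF⟩, hF⟩ := hF
    obtain ⟨f, hfF, hf⟩ := h.homogeneous.exists_aut_disjoint_neighbors F True (r₁ := r)
      (by simpa using ih fun x hx => (hF x hx).2) (by simpa [and_comm] using hfin)
    obtain ⟨x, hx⟩ := hne
    have hrfr : X.left r (f.onLeft r) :=
      X.left.trans (hrF x hx) (hfF x hx ▸ f.left_iff.2 (hF x hx).1)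
    have hleft : ∀ y ∈ insert (f.onLeft r) (insert r F), X.left r y := by
      simpa [hrfr] using hrF
    obtain ⟨b, hb⟩ := h.exists_forall_cross hT (insert (f.onLeft r) (insert r F))
      fun y hy z hz => X.left.trans (X.left.symm (hleft y hy)) (hleft z hz)
    simp only [Finset.mem_insert, forall_eq_or_imp] at hb
    exact hf b (fun y hy => iff_true_intro (hb.2.2 y hy)) hb.1 hb.2.1

theorem cross_of_finite_rightCliques_cross_not_cross (h : X.IsTame) [Infinite (Quotient X.right)]
    {r₁ r₂ : R} (hne : r₁ ≠ r₂) (hs : X.left r₁ r₂)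
    (hfin : (X.rightCliques {b | X.cross r₁ b ∧ ¬ X.cross r₂ b}).Finite) :
    X.HasLeftTriangle ∧ ∀ x y z b, x ≠ y → x ≠ z → y ≠ z → X.left x y → X.left x z →
      X.cross x b → X.cross y b → X.cross z b := by
  obtain ⟨f, hfr₂, hf⟩ := h.homogeneous.exists_aut_disjoint_neighbors {r₂} False (r₁ := r₁)
    (by simpa using! h.compl.infinite_rightCliques_neighbors r₂)
    (by simpa [and_comm] using hfin)
  simp only [Finset.mem_singleton, forall_eq, iff_false] at hfr₂ hf
  obtain ⟨b₀, hb₁, hb₂⟩ := h.exists_cross_not_cross hne hs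
  have hne₁ : r₁ ≠ f.onLeft r₁ := fun hc => hf b₀ hb₂ (hc ▸ hb₁) hb₁
  have hne₂ : f.onLeft r₁ ≠ r₂ := fun hc => hne (f.onLeft.injective (hc.trans hfr₂.symm))
  have hs₁ : X.left r₁ (f.onLeft r₁) :=
    X.left.trans hs (X.left.symm (hfr₂ ▸ f.left_iff.2 hs))
  refine ⟨⟨r₁, f.onLeft r₁, r₂, hne₁, hne, hne₂, hs₁, hs⟩, ?_⟩
  intro x y z b hxy hxz hyz sxy sxz hx hy
  obtain ⟨g, hgx, hgy, hgz⟩ := h.homogeneous.exists_aut_left_triple hxy hxz hyz sxy sxz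
    hne₁ hne hne₂ hs₁ hs
  by_contra hz
  exact hf (g.onRight b) (by rwa [← hgz, g.cross_iff]) (hgy ▸ g.cross_iff.2 hy)
    (hgx ▸ g.cross_iff.2 hx)

/-- Otherwise, of three vertices of a left clique, `b` can neither have exactly two as neighbors
nor, by complementation, exactly one. -/
theorem infinite_rightCliques_cross_not_cross (h : X.IsTame) [Infinite (Quotient X.right)]
    {r₁ r₂ : R} (hne : r₁ ≠ r₂) (hs : X.left r₁ r₂) :
    (X.rightCliques {b | X.cross r₁ b ∧ ¬ X.cross r₂ b}).Infinite := by
  intro hfin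
  obtain ⟨⟨x, y, z, hxy, hxz, hyz, hsxy, hsxz⟩, not_two⟩ :=
    h.cross_of_finite_rightCliques_cross_not_cross hne hs hfin
  have not_one := (h.compl.cross_of_finite_rightCliques_cross_not_cross hne.symm
    (X.left.symm hs) (by simpa [and_comm] using! hfin)).2
  obtain ⟨b, hxb, hyb⟩ := h.exists_cross_not_cross hxy hsxy
  by_cases hzb : X.cross z b
  · exact hyb (not_two x z y b hxz hxy hyz.symm hsxz hsxy hxb hzb)
  · exact not_one y z x b hyz hxy.symm hxz.symm (X.left.trans (X.left.symm hsxy) hsxz)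
      (X.left.symm hsxy) hyb hzb hxb

end IsTame

/-! ### Minimally omitted structures -/

variable {P Q : Type*} {Y : CliquePair P Q}

/-- The maps `x`, `y` restrict to an embedding into `X` of the substructure of `Y` on `A`, `C`. -/
structure EmbedsOn (X : CliquePair R B) (Y : CliquePair P Q) (A : Set P) (C : Set Q) (x : P → R)
    (y : Q → B) : Prop where
  injOn_left : Set.InjOn x A
  injOn_right : Set.InjOn y C
  left_iff : ∀ i ∈ A, ∀ j ∈ A, (X.left (x i) (x j) ↔ Y.left i j)
  right_iff : ∀ i ∈ C, ∀ j ∈ C, (X.right (y i) (y j) ↔ Y.right i j)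
  cross_iff : ∀ i ∈ A, ∀ j ∈ C, (X.cross (x i) (y j) ↔ Y.cross i j)

namespace EmbedsOn

variable {A A' : Set P} {C C' : Set Q} {x x' : P → R} {y y' : Q → B}

theorem flip (h : X.EmbedsOn Y A C x y) : X.flip.EmbedsOn Y.flip C A y x :=
  ⟨h.injOn_right, h.injOn_left, h.right_iff, h.left_iff, fun j hj i hi => h.cross_iff i hi j hj⟩

theorem congr (h : X.EmbedsOn Y A C x y) (hx : Set.EqOn x' x A) (hy : Set.EqOn y' y C) :
    X.EmbedsOn Y A C x' y' :=
  ⟨h.injOn_left.congr hx.symm, h.injOn_right.congr hy.symm,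
    fun i hi j hj => by rw [hx hi, hx hj, h.left_iff i hi j hj],
    fun i hi j hj => by rw [hy hi, hy hj, h.right_iff i hi j hj],
    fun i hi j hj => by rw [hx hi, hy hj, h.cross_iff i hi j hj]⟩

theorem comp_aut (h : X.EmbedsOn Y A C x y) (f : X.Aut) :
    X.EmbedsOn Y A C (f.onLeft ∘ x) (f.onRight ∘ y) :=
  ⟨f.onLeft.injective.comp_injOn h.injOn_left, f.onRight.injective.comp_injOn h.injOn_right,
    fun i hi j hj => f.left_iff.trans (h.left_iff i hi j hj),
    fun i hi j hj => f.right_iff.trans (h.right_iff i hi j hj),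
    fun i hi j hj => f.cross_iff.trans (h.cross_iff i hi j hj)⟩

theorem sameType (h : X.EmbedsOn Y A C x y) (h' : X.EmbedsOn Y A' C' x' y') :
    X.SameType X (fun i : ↥(A ∩ A') => x i) (fun j : ↥(C ∩ C') => y j)
      (fun i => x' i) (fun j => y' j) where
  eq_left i j := by rw [h.injOn_left.eq_iff i.2.1 j.2.1, h'.injOn_left.eq_iff i.2.2 j.2.2]
  eq_right i j := by rw [h.injOn_right.eq_iff i.2.1 j.2.1, h'.injOn_right.eq_iff i.2.2 j.2.2]
  left_iff i j := by rw [h.left_iff _ i.2.1 _ j.2.1, h'.left_iff _ i.2.2 _ j.2.2]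
  right_iff i j := by rw [h.right_iff _ i.2.1 _ j.2.1, h'.right_iff _ i.2.2 _ j.2.2]
  cross_iff i j := by rw [h.cross_iff _ i.2.1 _ j.2.1, h'.cross_iff _ i.2.2 _ j.2.2]

theorem glue {i j : P} (hi : X.EmbedsOn Y {i}ᶜ C x y) (hj : X.EmbedsOn Y {j}ᶜ C x y) (hij : i ≠ j)
    (hne : x i ≠ x j) (hs : X.left (x i) (x j) ↔ Y.left i j) :
    X.EmbedsOn Y Set.univ C x y := by
  have pairs (k l : P) : (k ≠ i ∧ l ≠ i) ∨ (k ≠ j ∧ l ≠ j) ∨ (k = i ∧ l = j) ∨ (k = j ∧ l = i) := by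
    grind
  refine ⟨fun k _ l _ hkl => ?_, hi.injOn_right, fun k _ l _ => ?_, hi.right_iff,
    fun k _ q hq => ?_⟩
  · rcases pairs k l with ⟨hk, hl⟩ | ⟨hk, hl⟩ | ⟨rfl, rfl⟩ | ⟨rfl, rfl⟩
    · exact hi.injOn_left hk hl hkl
    · exact hj.injOn_left hk hl hkl
    · exact (hne hkl).elim
    · exact (hne hkl.symm).elim
  · rcases pairs k l with ⟨hk, hl⟩ | ⟨hk, hl⟩ | ⟨rfl, rfl⟩ | ⟨rfl, rfl⟩
    · exact hi.left_iff k hk l hl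
    · exact hj.left_iff k hk l hl
    · exact hs
    · rw [X.left.comm', hs, Y.left.comm']
  · rcases ne_or_eq k i with hk | rfl
    · exact hi.cross_iff k hk q hq
    · exact hj.cross_iff k hij q hq

end EmbedsOn

theorem IsHomogeneous.exists_amalgam [Finite P] [Finite Q] (h : X.IsHomogeneous) {i j : P}
    (hij : i ≠ j) {x₁ x₂ : P → R} {y₁ y₂ : Q → B} (h₁ : X.EmbedsOn Y {i}ᶜ Set.univ x₁ y₁)
    (h₂ : X.EmbedsOn Y {j}ᶜ Set.univ x₂ y₂) :
    ∃ x y, X.EmbedsOn Y {i}ᶜ Set.univ x y ∧ X.EmbedsOn Y {j}ᶜ Set.univ x y := by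
  classical
  obtain ⟨f, hfx, hfy⟩ := h.exists_aut (h₂.sameType h₁)
  refine ⟨Function.update x₁ i (f.onLeft (x₂ i)), y₁, h₁.congr (fun k hk => ?_) fun _ _ => rfl,
    (h₂.comp_aut f).congr (fun k hk => ?_) fun q _ => (hfy ⟨q, trivial, trivial⟩).symm⟩
  · exact Function.update_of_ne hk _ _
  · rcases eq_or_ne k i with rfl | hki
    · exact Function.update_self ..
    · rw [Function.update_of_ne hki]
      exact (hfx ⟨k, hk, hki⟩).symm

/-- The properties of a minimally omitted substructure `Y` of `X` different from `T_r`, `T_b`, `D`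
and their cross-edge complements. -/
structure IsCritical (X : CliquePair R B) (Y : CliquePair P Q) : Prop where
  nonempty_left : Nonempty P
  nonempty_right : Nonempty Q
  omitted : ∀ x y, ¬ X.EmbedsOn Y Set.univ Set.univ x y
  delete_left : ∀ i, ∃ x y, X.EmbedsOn Y {i}ᶜ Set.univ x y
  delete_right : ∀ j, ∃ x y, X.EmbedsOn Y Set.univ {j}ᶜ x y
  balanced : Y.IsBalanced
  realizesTr : Y.RealizesTr → X.RealizesTr
  realizesTr_compl : Y.compl.RealizesTr → X.compl.RealizesTr
  realizesTr_flip : Y.flip.RealizesTr → X.flip.RealizesTr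
  realizesTr_flip_compl : Y.flip.compl.RealizesTr → X.flip.compl.RealizesTr

namespace IsCritical

theorem flip (c : X.IsCritical Y) : X.flip.IsCritical Y.flip where
  nonempty_left := c.nonempty_right
  nonempty_right := c.nonempty_left
  omitted x y hxy := c.omitted y x hxy.flip
  delete_left j := by
    obtain ⟨x, y, h⟩ := c.delete_right j
    exact ⟨y, x, h.flip⟩
  delete_right i := by
    obtain ⟨x, y, h⟩ := c.delete_left i
    exact ⟨y, x, h.flip⟩
  balanced := c.balanced.flip
  realizesTr := c.realizesTr_flip
  realizesTr_compl := c.realizesTr_flip_compl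
  realizesTr_flip := c.realizesTr
  realizesTr_flip_compl := c.realizesTr_compl

theorem exists_left_iff (c : X.IsCritical Y) :
    ∃ x : P → R, Function.Injective x ∧ ∀ i j, X.left (x i) (x j) ↔ Y.left i j := by
  obtain ⟨q⟩ := c.nonempty_right
  obtain ⟨x, y, h⟩ := c.delete_right q
  exact ⟨x, Set.injOn_univ.1 h.injOn_left, fun i j => h.left_iff i trivial j trivial⟩

theorem hasLeftEdge (c : X.IsCritical Y) (hY : Y.HasLeftEdge) : X.HasLeftEdge := by
  obtain ⟨x, hx, hxs⟩ := c.exists_left_iff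
  obtain ⟨p, p', hne, hs⟩ := hY
  exact ⟨x p, x p', hx.ne hne, (hxs p p').2 hs⟩

/-! ### Amalgamation of one-vertex deletions -/

theorem exists_amalgam [Finite P] [Finite Q] (c : X.IsCritical Y) (h : X.IsHomogeneous) {i j : P}
    (hij : i ≠ j) :
    ∃ x y, X.EmbedsOn Y {i}ᶜ Set.univ x y ∧ X.EmbedsOn Y {j}ᶜ Set.univ x y ∧
      ((X.left (x i) (x j) ↔ Y.left i j) → x i = x j) := by
  obtain ⟨x₁, y₁, h₁⟩ := c.delete_left i
  obtain ⟨x₂, y₂, h₂⟩ := c.delete_left j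
  obtain ⟨x, y, hi, hj⟩ := h.exists_amalgam hij h₁ h₂
  exact ⟨x, y, hi, hj, fun hs => by_contra fun hne => c.omitted x y (hi.glue hj hij hne hs)⟩

theorem cross_iff_of_left_of_left [Finite P] [Finite Q] (c : X.IsCritical Y)
    (h : X.IsHomogeneous) {i j k : P} (hij : i ≠ j) (hki : k ≠ i) (hkj : k ≠ j)
    (hik : Y.left i k) (hjk : Y.left j k) (q : Q) : Y.cross i q ↔ Y.cross j q := by
  obtain ⟨x, y, ei, ej, hx⟩ := c.exists_amalgam h hij
  have hxik := (ej.left_iff i hij k hkj).2 hik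
  have hxjk := (ei.left_iff j hij.symm k hki).2 hjk
  have hxij := hx (iff_of_true (X.left.trans hxik (X.left.symm hxjk))
    (Y.left.trans hik (Y.left.symm hjk)))
  rw [← ej.cross_iff i hij q trivial, ← ei.cross_iff j hij.symm q trivial, hxij]

/-- If `i` and `k` are adjacent but `i` and `j` are not, then amalgamating the deletions of `i`
and `j` neither identifies `i` with `j` nor makes them adjacent, as `k` is adjacent to `i` only. -/
theorem left_of_hasLeftEdge [Finite P] [Finite Q] (c : X.IsCritical Y) (h : X.IsHomogeneous)
    (hY : Y.HasLeftEdge) (j j' : P) : Y.left j j' := by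
  obtain ⟨i, k, hik, hs⟩ := hY
  suffices hleft : ∀ j, Y.left i j from Y.left.trans (Y.left.symm (hleft j)) (hleft j')
  intro j
  by_contra hj
  have hij : i ≠ j := ne_of_not_left hj
  have hkj : k ≠ j := fun hc => hj (hc ▸ hs)
  obtain ⟨x, y, ei, ej, hx⟩ := c.exists_amalgam h hij
  have hxik := (ej.left_iff i hij k hkj).2 hs
  have hxkj : ¬ X.left (x k) (x j) := fun hc =>
    hj (Y.left.trans hs ((ei.left_iff k hik.symm j hij.symm).1 hc))
  have hxij : ¬ X.left (x i) (x j) := fun hc => hxkj (X.left.trans (X.left.symm hxik) hc)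
  exact hxij (hx (iff_of_false hxij hj) ▸ X.left.refl _)

/-- Amalgamating the deletions of two right vertices in different cliques yields copies of them
in the same clique. -/
theorem exists_right_of_not_right [Finite P] [Finite Q] (c : X.IsCritical Y)
    (h : X.IsHomogeneous) {q q' : Q} (hq : ¬ Y.right q q') :
    ∃ (x : P → R) (b b' : B), X.right b b' ∧ (∀ i j, X.left (x i) (x j) ↔ Y.left i j) ∧
      (∀ i, X.cross (x i) b ↔ Y.cross i q) ∧ ∀ i, X.cross (x i) b' ↔ Y.cross i q' := by
  have hne : q ≠ q' := ne_of_not_right hq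
  obtain ⟨y, x, e, e', hy⟩ := c.flip.exists_amalgam h.flip hne
  refine ⟨x, y q, y q', ?_, fun i j => e.right_iff i trivial j trivial,
    fun i => e'.cross_iff q hne i trivial, fun i => e.cross_iff q' hne.symm i trivial⟩
  by_contra hc
  exact hc (hy (iff_of_false hc hq) ▸ X.right.refl _)

theorem agree_iff_of_not_right [Finite P] [Finite Q] (c : X.IsCritical Y) (h : X.IsHomogeneous)
    (hb : X.IsBalanced) {q q' : Q} (hq : ¬ Y.right q q') {p p' : P} (hp : Y.left p p') :
    (Y.cross p q ↔ Y.cross p q') ↔ (Y.cross p' q ↔ Y.cross p' q') := by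
  obtain ⟨x, b, b', hbb', hx, hxb, hxb'⟩ := c.exists_right_of_not_right h hq
  simpa only [hxb, hxb'] using hb (x p) (x p') b b' ((hx p p').2 hp) hbb'

theorem cross_iff_of_not_right [Finite P] [Finite Q] (c : X.IsCritical Y) (h : X.IsHomogeneous)
    (hedge : ¬ X.flip.HasLeftEdge) {q q' : Q} (hq : ¬ Y.right q q') (p : P) :
    Y.cross p q ↔ Y.cross p q' := by
  obtain ⟨x, b, b', hbb', -, hxb, hxb'⟩ := c.exists_right_of_not_right h hq
  rw [← hxb, ← hxb', eq_of_right hedge hbb']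

end IsCritical

/-! ### Realizing prescribed patterns -/

theorem exists_injOn_mapsTo {α ι : Type*} [Finite ι] {S : Set α} {A : Set ι} (hne : S.Nonempty)
    (hS : A.Nontrivial → S.Infinite) : ∃ f : ι → α, Set.InjOn f A ∧ Set.MapsTo f A S := by
  have : Nonempty α := ⟨hne.some⟩
  have hcard : A.encard ≤ S.encard := by
    by_cases hA : A.Nontrivial
    · exact (hS hA).encard_eq ▸ le_top
    · exact (Set.encard_le_one_iff_subsingleton.2 (Set.not_nontrivial_iff.1 hA)).trans
        (Set.one_le_encard_iff_nonempty.2 hne)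
  obtain ⟨f, hf, hinj⟩ := A.toFinite.exists_injOn_of_encard_le hcard
  exact ⟨f, hinj, hf⟩

namespace IsTame

theorem exists_left_clique_pattern (h : X.IsTame) [Finite P] (e : P → Prop) (r : R) (b : B)
    (h₁ : {i | e i}.Nontrivial → X.RealizesTr)
    (h₂ : {i | ¬ e i}.Nontrivial → X.compl.RealizesTr) :
    ∃ x : P → R, Function.Injective x ∧ ∀ i, X.left r (x i) ∧ (X.cross (x i) b ↔ e i) := by
  classical
  obtain ⟨f, hf, hfS⟩ := exists_injOn_mapsTo (h.exists_left_cross h.hasLeftEdge r b)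
    fun he => h.infinite_left_neighbors (h₁ he) r b
  obtain ⟨g, hg, hgS⟩ := exists_injOn_mapsTo (h.exists_left_not_cross h.hasLeftEdge r b)
    fun he => h.compl.infinite_left_neighbors (h₂ he) r b
  have disjoint (i : P) (hi : i ∈ {i | e i}) (j : P) (hj : j ∉ {i | e i}) : f i ≠ g j :=
    fun hij => (hgS hj).2 (hij ▸ (hfS hi).2)
  refine ⟨{i | e i}.piecewise f g, (Set.injective_piecewise_iff _).2 ⟨hf, hg, disjoint⟩,
    fun i => ?_⟩
  by_cases hi : e i
  · rw [Set.piecewise_eq_of_mem {i | e i} f g hi]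
    exact ⟨(hfS hi).1, iff_of_true (hfS hi).2 hi⟩
  · rw [Set.piecewise_eq_of_notMem {i | e i} f g hi]
    exact ⟨(hgS hi).1, iff_of_false (hgS hi).2 hi⟩

theorem exists_complete_pattern (h : X.IsTame) (hT : X.RealizesTr) [Finite P] [Nonempty P]
    [Finite Q] : ∃ (x : P → R) (y : Q → B), Function.Injective x ∧
      (∀ p p', X.left (x p) (x p')) ∧ X.RightSeparated y ∧ ∀ p q, X.cross (x p) (y q) := by
  classical
  cases nonempty_fintype P
  obtain ⟨r, -⟩ := h.two_left
  obtain ⟨x, hx, hxr⟩ := exists_injective_mem_of_infinite (ι := P) (h.infinite_left_clique hT r)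
  have hleft (p p' : P) : X.left (x p) (x p') := X.left.trans (X.left.symm (hxr p)) (hxr p')
  obtain ⟨y, hy, hxy⟩ := exists_rightSeparated (κ := Q) <|
    h.infinite_rightCliques_common_neighbors hT (F := Finset.univ.image x)
      (Finset.univ_nonempty.image _) (by simpa using hleft)
  exact ⟨x, y, hx, hleft, hy, fun p q => hxy q _ (by simp)⟩

end IsTame

namespace IsCritical

theorem exists_rightSeparated_cross_iff [Finite Q] (c : X.IsCritical Y) (h : X.IsTame)
    (hQ : ¬ Y.flip.HasLeftEdge) (r : R) (p : Prop) :
    ∃ y : Q → B, X.RightSeparated y ∧ ∀ q, X.cross r (y q) ↔ p := by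
  by_cases hedge : X.flip.HasLeftEdge
  · obtain ⟨y₀, -, hy₀⟩ := c.flip.exists_left_iff
    choose y hy hry using fun q => (h.flip hedge).exists_left_cross_iff hedge (y₀ q) r p
    exact ⟨y, fun q q' hq => eq_of_right hQ ((hy₀ q q').1
      (X.right.trans (hy q) (X.right.trans hq (X.right.symm (hy q'))))), hry⟩
  · have := h.infinite_quotient_right (.inr hedge)
    by_cases hp : p
    · simpa [hp] using exists_rightSeparated (κ := Q) (h.infinite_rightCliques_neighbors r)
    · simpa [hp] using! exists_rightSeparated (κ := Q)
        (h.compl.infinite_rightCliques_neighbors r)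

theorem exists_rightSeparated_cross_not_cross [Finite Q] (c : X.IsCritical Y) (h : X.IsTame)
    (hQ : ¬ Y.flip.HasLeftEdge) {r r' : R} (hne : r ≠ r') (hs : X.left r r') :
    ∃ y : Q → B, X.RightSeparated y ∧ ∀ q, X.cross r (y q) ∧ ¬ X.cross r' (y q) := by
  by_cases hbig : X.HasLeftTriangle ∨ ¬ X.flip.HasLeftEdge
  · have := h.infinite_quotient_right hbig
    exact exists_rightSeparated (h.infinite_rightCliques_cross_not_cross hne hs)
  · obtain ⟨y, hy, hry⟩ := c.exists_rightSeparated_cross_iff h hQ r True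
    replace hry (q : Q) : X.cross r (y q) := (hry q).2 trivial
    refine ⟨y, hy, fun q => ⟨hry q, fun hr'q => hbig (.inl ?_)⟩⟩
    obtain ⟨z, hz, hzq⟩ := h.exists_left_not_cross h.hasLeftEdge r (y q)
    exact ⟨r, r', z, hne, fun hc => hzq (hc ▸ hry q), fun hc => hzq (hc ▸ hr'q), hs, hz⟩

theorem exists_split_pattern [Finite P] [Finite Q] (c : X.IsCritical Y) (h : X.IsTame)
    (hP : ∀ i j, Y.left i j) (hQ : ¬ Y.flip.HasLeftEdge) {q₀ : Q} {p p' : P}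
    (hp : Y.cross p q₀) (hp' : ¬ Y.cross p' q₀) :
    ∃ (x : P → R) (y : Q → B), Function.Injective x ∧ (∀ p p', X.left (x p) (x p')) ∧
      X.RightSeparated y ∧ ∀ p q, X.cross (x p) (y q) ↔ Y.cross p q₀ := by
  classical
  have hpp' : p ≠ p' := fun hc => hp' (hc ▸ hp)
  have eq_or_eq (k : P) : k = p ∨ k = p' := by
    by_contra! hk
    exact hp' ((c.cross_iff_of_left_of_left h.homogeneous hpp' hk.1 hk.2 (hP _ _) (hP _ _) q₀).1 hp)
  obtain ⟨r, r', hne, hs⟩ := h.hasLeftEdge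
  obtain ⟨y, hy, hry⟩ := c.exists_rightSeparated_cross_not_cross h hQ hne hs
  have hx : (if p = p then r else r') = r ∧ (if p' = p then r else r') = r' :=
    ⟨if_pos rfl, if_neg hpp'.symm⟩
  refine ⟨fun k => if k = p then r else r', y, fun k l hkl => ?_, fun k l => ?_, hy,
    fun k q => ?_⟩
  · rcases eq_or_eq k with rfl | rfl <;> rcases eq_or_eq l with rfl | rfl <;> simp_all
  · rcases eq_or_eq k with rfl | rfl <;> rcases eq_or_eq l with rfl | rfl <;>
      simp [hpp'.symm, hs, X.left.symm hs]
  · rcases eq_or_eq k with rfl | rfl <;> simp [hx, hp, hp', hry]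

theorem exists_constant_pattern [Finite P] [Finite Q] (c : X.IsCritical Y) (h : X.IsTame)
    (hP : ∀ i j, Y.left i j) (hQ : ¬ Y.flip.HasLeftEdge) (q₀ : Q) :
    ∃ (x : P → R) (y : Q → B), Function.Injective x ∧ (∀ p p', X.left (x p) (x p')) ∧
      X.RightSeparated y ∧ ∀ p q, X.cross (x p) (y q) ↔ Y.cross p q₀ := by
  by_cases hsplit : ∃ p p', Y.cross p q₀ ∧ ¬ Y.cross p' q₀
  · obtain ⟨p, p', hp, hp'⟩ := hsplit
    exact c.exists_split_pattern h hP hQ hp hp'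
  have := c.nonempty_left
  obtain ⟨p₀⟩ := c.nonempty_left
  have hconst (p : P) : Y.cross p q₀ ↔ Y.cross p₀ q₀ := by
    by_contra hc
    exact hsplit (by grind)
  rcases subsingleton_or_nontrivial P with hsub | hnontriv
  · obtain ⟨r, -⟩ := h.two_left
    obtain ⟨y, hy, hry⟩ := c.exists_rightSeparated_cross_iff h hQ r (Y.cross p₀ q₀)
    exact ⟨fun _ => r, y, Function.injective_of_subsingleton _, fun _ _ => X.left.refl r, hy,
      fun p q => (hry q).trans (hconst p).symm⟩
  obtain ⟨p₁, hp₁⟩ := exists_ne p₀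
  by_cases hp₀ : Y.cross p₀ q₀
  · obtain ⟨x, y, hx, hs, hy, hxy⟩ := h.exists_complete_pattern (P := P) (Q := Q)
      (c.realizesTr ⟨p₁, p₀, q₀, hp₁, hP _ _, (hconst p₁).2 hp₀, hp₀⟩)
    exact ⟨x, y, hx, hs, hy, fun p q => iff_of_true (hxy p q) ((hconst p).2 hp₀)⟩
  · obtain ⟨x, y, hx, hs, hy, hxy⟩ := h.compl.exists_complete_pattern (P := P) (Q := Q)
      (c.realizesTr_compl ⟨p₁, p₀, q₀, hp₁, hP _ _, mt (hconst p₁).1 hp₀, hp₀⟩)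
    exact ⟨x, y, hx, hs, hy, fun p q => iff_of_false (hxy p q) (mt (hconst p).1 hp₀)⟩

/-! ### The color classes of a minimally omitted structure -/

/-- Realize one vertex of each clique together with its neighbors; balance determines the
remaining cross edges. -/
theorem not_left_clique_right_clique [Finite P] [Finite Q] (c : X.IsCritical Y) (h : X.IsTame)
    (hP : ∀ i j, Y.left i j) : ¬ ∀ i j, Y.right i j := by
  intro hQ
  obtain ⟨p₀⟩ := c.nonempty_left
  obtain ⟨q₀⟩ := c.nonempty_right
  obtain ⟨r, -⟩ := h.two_left
  obtain ⟨b, -⟩ := h.two_right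
  obtain ⟨x, hx, hxb⟩ := h.exists_left_clique_pattern (fun p => Y.cross p q₀) r b
    (fun ⟨i, hi, j, hj, hij⟩ => c.realizesTr ⟨i, j, q₀, hij, hP i j, hi, hj⟩)
    (fun ⟨i, hi, j, hj, hij⟩ => c.realizesTr_compl ⟨i, j, q₀, hij, hP i j, hi, hj⟩)
  obtain ⟨y, hy, hyb⟩ : ∃ y : Q → B, Function.Injective y ∧
      ∀ q, X.right b (y q) ∧ (X.cross (x p₀) (y q) ↔ Y.cross p₀ q) := by
    by_cases hedge : X.flip.HasLeftEdge
    · exact (h.flip hedge).exists_left_clique_pattern (fun q => Y.cross p₀ q) b (x p₀)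
        (fun ⟨i, hi, j, hj, hij⟩ => c.realizesTr_flip ⟨i, j, p₀, hij, hQ i j, hi, hj⟩)
        (fun ⟨i, hi, j, hj, hij⟩ => c.realizesTr_flip_compl ⟨i, j, p₀, hij, hQ i j, hi, hj⟩)
    · have hq (q q' : Q) : q = q' := eq_of_right (mt c.flip.hasLeftEdge hedge) (hQ q q')
      exact ⟨fun _ => b, fun q q' _ => hq q q', fun q =>
        ⟨X.right.refl _, hq q₀ q ▸ (hxb p₀).2⟩⟩
  have hxleft (i j : P) : X.left (x i) (x j) := X.left.trans (X.left.symm (hxb i).1) (hxb j).1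
  refine c.omitted x y ⟨hx.injOn, hy.injOn, fun i _ j _ => iff_of_true (hxleft i j) (hP i j),
    fun i _ j _ => iff_of_true (X.right.trans (X.right.symm (hyb i).1) (hyb j).1) (hQ i j),
    fun p _ q _ => ?_⟩
  have hX := h.balanced (x p) (x p₀) b (y q) (hxleft p p₀) (hyb q).1
  have hY := c.balanced p p₀ q₀ q (hP _ _) (hQ _ _)
  rw [(hxb p).2, (hxb p₀).2, (hyb q).2] at hX
  tauto

/-- Realize `Y` with every right vertex replaced by a twin of `q₀`, then move each right vertex
within its clique. -/
theorem hasLeftEdge_flip_of_left_clique [Finite P] [Finite Q] (c : X.IsCritical Y)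
    (h : X.IsTame) (hP : ∀ i j, Y.left i j) : Y.flip.HasLeftEdge := by
  by_contra hQ
  obtain ⟨p₀⟩ := c.nonempty_left
  obtain ⟨q₀⟩ := c.nonempty_right
  obtain ⟨x, y₀, hx, hs, hy₀, hxy₀⟩ := c.exists_constant_pattern h hP hQ q₀
  have move (q : Q) : ∃ b, X.right (y₀ q) b ∧ ∀ p, X.cross (x p) b ↔ Y.cross p q := by
    by_cases hq : Y.right q q₀
    · exact ⟨y₀ q, X.right.refl _, fun p => by rw [hxy₀, eq_of_right hQ hq]⟩
    by_cases hedge : X.flip.HasLeftEdge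
    · obtain ⟨b, hb, hbp⟩ := (h.flip hedge).exists_left_cross_iff hedge (y₀ q) (x p₀) (Y.cross p₀ q)
      refine ⟨b, hb, fun p => ?_⟩
      have hX := h.balanced (x p) (x p₀) (y₀ q) b (hs _ _) hb
      have hY := c.agree_iff_of_not_right h.homogeneous h.balanced hq (hP p p₀)
      simp only [flip_cross] at hbp
      rw [hxy₀, hxy₀, hbp] at hX
      tauto
    · exact ⟨y₀ q, X.right.refl _, fun p => by
        rw [hxy₀, c.cross_iff_of_not_right h.homogeneous hedge hq]⟩
  choose y hy hxy using move
  have hysep : X.RightSeparated y := fun q q' hq =>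
    hy₀ q q' (X.right.trans (hy q) (X.right.trans hq (X.right.symm (hy q'))))
  exact c.omitted x y ⟨hx.injOn, fun i _ j _ => hysep.eq_iff.1,
    fun i _ j _ => iff_of_true (hs i j) (hP i j),
    fun i _ j _ => hysep.right_iff.trans ⟨fun hij => hij ▸ Y.right.refl i, eq_of_right hQ⟩,
    fun p _ q _ => hxy q p⟩

theorem hasLeftEdge_of_subsingleton_right (c : X.IsCritical Y) (h : X.IsTame) [Subsingleton Q] :
    Y.HasLeftEdge := by
  by_contra hP
  obtain ⟨q₀⟩ := c.nonempty_right
  obtain ⟨b, -⟩ := h.two_right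
  obtain ⟨x₀, -, hx₀⟩ := c.exists_left_iff
  choose x hx hxb using fun p => h.exists_left_cross_iff h.hasLeftEdge (x₀ p) b (Y.cross p q₀)
  have hxs (i j : P) : X.left (x i) (x j) ↔ Y.left i j := by
    rw [← hx₀]
    exact ⟨fun hij => X.left.trans (hx i) (X.left.trans hij (X.left.symm (hx j))),
      fun hij => X.left.trans (X.left.symm (hx i)) (X.left.trans hij (hx j))⟩
  exact c.omitted x (fun _ => b)
    ⟨fun i _ j _ hij => eq_of_left hP ((hxs i j).1 (hij ▸ X.left.refl _)),
      (Function.injective_of_subsingleton _).injOn, fun i _ j _ => hxs i j,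
      fun i _ j _ => iff_of_true (X.right.refl _) (Subsingleton.elim i j ▸ Y.right.refl _),
      fun p _ q _ => Subsingleton.elim q₀ q ▸ hxb p⟩

theorem not_left_clique [Finite P] [Finite Q] (c : X.IsCritical Y) (h : X.IsTame) :
    ¬ ∀ i j, Y.left i j := fun hP =>
  c.not_left_clique_right_clique h hP
    (c.flip.left_of_hasLeftEdge h.homogeneous.flip (c.hasLeftEdge_flip_of_left_clique h hP))

theorem not_right_clique [Finite P] [Finite Q] (c : X.IsCritical Y) (h : X.IsTame) :
    ¬ ∀ i j, Y.right i j := by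
  intro hQ
  refine c.not_left_clique h (c.left_of_hasLeftEdge h.homogeneous ?_)
  by_cases hedge : X.flip.HasLeftEdge
  · exact c.flip.hasLeftEdge_flip_of_left_clique (h.flip hedge) hQ
  · have : Subsingleton Q := ⟨fun q q' => eq_of_right (mt c.flip.hasLeftEdge hedge) (hQ q q')⟩
    exact c.hasLeftEdge_of_subsingleton_right h

theorem independent_left [Finite P] [Finite Q] (c : X.IsCritical Y) (h : X.IsBasic)
    (hb : X.IsBalanced) (hedge : X.HasLeftEdge ∨ X.flip.HasLeftEdge) :
    (∃ i j, ¬ Y.left i j) ∧ ¬ Y.HasLeftEdge := by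
  have hP : ¬ ∀ i j, Y.left i j := by
    rcases hedge with hedge | hedge
    · exact c.not_left_clique ⟨h, hedge, hb⟩
    · exact c.flip.not_right_clique ⟨h.flip, hedge, hb.flip⟩
  exact ⟨by simpa using hP, fun hY => hP (c.left_of_hasLeftEdge h.homogeneous hY)⟩

end IsCritical

end CliquePair

/-! ### From 2-colored graphs to pairs of clique partitions -/

section Translation

variable {V W : Type} {G : SimpleGraph V} {p red : V → Prop} {H : SimpleGraph W} {redH : W → Prop}

/-- Equality or adjacency in a class `p` inducing a disjoint union of cliques: the relation of
lying in a common clique. -/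
def cliqueSetoid (hp : IsUnionOfCliques G {v | p v}) : Setoid {v // p v} where
  r u v := u = v ∨ G.Adj u v
  iseqv := by
    refine ⟨fun u => Or.inl rfl, fun h => h.imp Eq.symm G.adj_symm, ?_⟩
    rintro u v w (rfl | huv) (rfl | hvw)
    · exact Or.inl rfl
    · exact Or.inr hvw
    · exact Or.inr huv
    · by_cases huw : u = w
      · exact Or.inl huw
      · exact Or.inr (hp u u.2 v v.2 w w.2 huv hvw (Subtype.coe_injective.ne huw))

theorem adj_iff_cliqueSetoid (hp : IsUnionOfCliques G {v | p v}) {u v : {v // p v}} :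
    G.Adj u v ↔ u ≠ v ∧ cliqueSetoid hp u v :=
  ⟨fun huv => ⟨fun h => huv.ne (congrArg Subtype.val h), Or.inr huv⟩,
    fun ⟨hne, huv⟩ => huv.resolve_left hne⟩

/-- A 2-colored graph whose color classes induce disjoint unions of cliques, as a `CliquePair`. -/
def ofGraph (hr : IsUnionOfCliques G {v | red v})
    (hb : IsUnionOfCliques G {v | ¬ red v}) : CliquePair {v // red v} {v // ¬ red v} :=
  ⟨cliqueSetoid hr, cliqueSetoid hb, fun r b => G.Adj r b⟩

theorem Ultrahomogeneous.compl (h : Ultrahomogeneous G red) :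
    Ultrahomogeneous G (fun v => ¬ red v) := by
  intro S hS f hf
  obtain ⟨ψ, hψ, hψf⟩ := h S hS f ⟨hf.1, fun v hv => not_iff_not.1 (hf.2.1 v hv), hf.2.2⟩
  exact ⟨ψ, fun v => not_congr (hψ v), hψf⟩

theorem Ultrahomogeneous.exists_iso (h : Ultrahomogeneous G red) {ι : Type} [Finite ι]
    {g g' : ι → V} (heq : ∀ i j, g i = g j ↔ g' i = g' j) (hred : ∀ i, red (g' i) ↔ red (g i))
    (hadj : ∀ i j, G.Adj (g' i) (g' j) ↔ G.Adj (g i) (g j)) :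
    ∃ ψ : G ≃g G, (∀ v, red (ψ v) ↔ red v) ∧ ∀ i, ψ (g i) = g' i := by
  have hext : ∀ i, Function.extend g g' id (g i) = g' i :=
    Function.FactorsThrough.extend_apply (fun i j hij => (heq i j).1 hij) id
  have hpartial : IsPartialIso G red (Set.range g) (Function.extend g g' id) := by
    refine ⟨?_, ?_, ?_⟩
    · rintro _ ⟨i, rfl⟩ _ ⟨j, rfl⟩ hij
      rwa [hext, hext, ← heq] at hij
    · rintro _ ⟨i, rfl⟩
      rw [hext, hred]
    · rintro _ ⟨i, rfl⟩ _ ⟨j, rfl⟩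
      rw [hext, hext, hadj]
  obtain ⟨ψ, hψ, hg⟩ := h _ (Set.finite_range g) _ hpartial
  exact ⟨ψ, hψ, fun i => (hg _ ⟨i, rfl⟩).trans (hext i)⟩

variable {hr : IsUnionOfCliques G {v | red v}} {hb : IsUnionOfCliques G {v | ¬ red v}}

theorem ne_of_red_of_not_red {u v : V} (hu : red u) (hv : ¬ red v) : u ≠ v :=
  fun huv => hv (huv ▸ hu)

/-- The automorphism of `ofGraph hr hb` induced by a color-preserving graph automorphism. -/
def autOfIso (ψ : G ≃g G) (hψ : ∀ v, red (ψ v) ↔ red v) : (ofGraph hr hb).Aut where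
  onLeft := ψ.toEquiv.subtypeEquiv fun v => (hψ v).symm
  onRight := ψ.toEquiv.subtypeEquiv fun v => not_congr (hψ v).symm
  left_iff := or_congr (Equiv.apply_eq_iff_eq _) ψ.map_adj_iff
  right_iff := or_congr (Equiv.apply_eq_iff_eq _) ψ.map_adj_iff
  cross_iff := ψ.map_adj_iff

theorem Ultrahomogeneous.isHomogeneous (h : Ultrahomogeneous G red) :
    (ofGraph hr hb).IsHomogeneous := by
  intro m n x x' y y' hxy
  obtain ⟨ψ, hψ, hg⟩ := h.exists_iso (g := Sum.elim (fun i => (x i).1) fun j => (y j).1)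
    (g' := Sum.elim (fun i => (x' i).1) fun j => (y' j).1)
    (by
      rintro (i | i) (j | j)
      · simpa [← Subtype.ext_iff] using hxy.eq_left i j
      · simp [ne_of_red_of_not_red (x _).2 (y _).2, ne_of_red_of_not_red (x' _).2 (y' _).2]
      · simp [(ne_of_red_of_not_red (x _).2 (y _).2).symm,
          (ne_of_red_of_not_red (x' _).2 (y' _).2).symm]
      · simpa [← Subtype.ext_iff] using hxy.eq_right i j)
    (by
      rintro (i | j)
      · exact iff_of_true (x' i).2 (x i).2
      · exact iff_of_false (y' j).2 (y j).2)
    (by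
      rintro (i | i) (j | j)
      · simp only [Sum.elim_inl, adj_iff_cliqueSetoid hr, ne_eq, hxy.eq_left]
        exact and_congr_right' (hxy.left_iff i j).symm
      · exact (hxy.cross_iff i j).symm
      · exact (G.adj_comm _ _).trans ((hxy.cross_iff j i).symm.trans (G.adj_comm _ _))
      · simp only [Sum.elim_inr, adj_iff_cliqueSetoid hb, ne_eq, hxy.eq_right]
        exact and_congr_right' (hxy.right_iff i j).symm)
  exact ⟨autOfIso ψ hψ, fun i => Subtype.ext (hg (Sum.inl i)),
    fun j => Subtype.ext (hg (Sum.inr j))⟩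

/-! ### Blow-ups -/

theorem blowUp_adj_inl_inl (hH : ∀ u v, redH u → redH v → ¬ H.Adj u v) {I : Type}
    {a a' : {w // redH w} × I} :
    (blowUp H redH I).Adj (Sum.inl a) (Sum.inl a') ↔ a ≠ a' ∧ a.1 = a'.1 := by
  simp only [blowUp, fromRel_adj, hH _ _ a.1.2 a'.1.2, hH _ _ a'.1.2 a.1.2, Prod.ext_iff, ne_eq,
    Sum.inl.injEq]
  tauto

theorem blowUp_adj_inl_inr {I : Type} {a : {w // redH w} × I} {b : {w // ¬ redH w}} :
    (blowUp H redH I).Adj (Sum.inl a) (Sum.inr b) ↔ H.Adj a.1 b := by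
  simp [blowUp, H.adj_comm b]

theorem blowUp_adj_inr_inr {I : Type} {b b' : {w // ¬ redH w}} :
    (blowUp H redH I).Adj (Sum.inr b) (Sum.inr b') ↔ H.Adj b b' := by
  have hne : H.Adj b b' → b ≠ b' := fun hbb' h => hbb'.ne (congrArg Subtype.val h)
  simpa [blowUp, H.adj_comm b'] using hne

theorem isBlowUpOf_of_equiv {Q I : Type} (hI : 2 ≤ Cardinal.mk I)
    (hI' : Cardinal.mk I ≤ Cardinal.aleph0) (e : {v // p v} ≃ Q × I)
    (hadj : ∀ u v : {v // p v}, G.Adj u v ↔ u ≠ v ∧ (e u).1 = (e v).1)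
    (htwin : ∀ u v : {v // p v}, (e u).1 = (e v).1 → ∀ b, ¬ p b → (G.Adj u b ↔ G.Adj v b)) :
    IsBlowUpOf G p := by
  classical
  obtain ⟨i₀⟩ : Nonempty I := Cardinal.mk_ne_zero_iff.1 (zero_lt_two.trans_le hI).ne'
  let vertex : Q ⊕ {v // ¬ p v} → V := Sum.elim (fun q => e.symm (q, i₀)) Subtype.val
  let eLeft : {v // p v} ≃ {x : Q ⊕ {v // ¬ p v} // x.isLeft} × I :=
    e.trans (Equiv.sumIsLeft.symm.prodCongr (Equiv.refl I))
  let eRight : {v // ¬ p v} ≃ {x : Q ⊕ {v // ¬ p v} // ¬ x.isLeft} :=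
    Equiv.sumIsRight.symm.trans (Equiv.subtypeEquivRight (by simp))
  have hindep : ∀ x y : Q ⊕ {v // ¬ p v}, x.isLeft → y.isLeft → ¬ (G.comap vertex).Adj x y := by
    rintro (q | b) (q' | b') hq hq' hqq'
    · simpa using (hadj _ _).1 hqq'
    all_goals simp at hq hq'
  have hleft : ∀ u v, (eLeft u).1 = (eLeft v).1 ↔ (e u).1 = (e v).1 :=
    fun u v => Equiv.sumIsLeft.symm.injective.eq_iff
  have hcross : ∀ u b, (G.comap vertex).Adj (eLeft u).1 (eRight b) ↔ G.Adj u b :=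
    fun u b => htwin _ u (by simp) b b.2
  refine ⟨_, G.comap vertex, fun x => x.isLeft, I, hindep, hI, hI',
    ⟨(Equiv.sumCompl p).symm.trans (eLeft.sumCongr eRight), ?_⟩, ?_⟩
  · intro u v
    obtain ⟨u | b, rfl⟩ := (Equiv.sumCompl p).surjective u <;>
      obtain ⟨v | b', rfl⟩ := (Equiv.sumCompl p).surjective v
    · simp [blowUp_adj_inl_inl hindep, hleft, hadj]
    · simpa [blowUp_adj_inl_inr] using hcross u b'
    · simpa [blowUp_adj_inl_inr, adj_comm] using hcross v b
    · simp [blowUp_adj_inr_inr, vertex, eRight]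
  · intro v
    obtain ⟨u | b, rfl⟩ := (Equiv.sumCompl p).surjective v
    · simp [blowUpRed, u.2]
    · simp [blowUpRed, b.2]

namespace CliquePair.IsHomogeneous

variable {R B : Type*} {X : CliquePair R B}

theorem exists_equiv_prod (h : X.IsHomogeneous) (r : R) :
    ∃ e : R ≃ Quotient X.left × {r' // X.left r r'},
      ∀ u v, (e u).1 = (e v).1 ↔ X.left u v := by
  choose f hf using fun q : Quotient X.left => h.exists_aut_left r q.out
  have hmem : ∀ q r', X.left r r' ↔ ⟦(f q).onLeft r'⟧ = q := fun q r' => by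
    rw [← (f q).left_iff, hf, ← Quotient.eq, Quotient.out_eq, eq_comm]
  exact ⟨(Equiv.sigmaFiberEquiv (Quotient.mk X.left)).symm.trans
    (Equiv.sigmaEquivProdOfEquiv fun q => ((f q).onLeft.subtypeEquiv (hmem q)).symm),
    fun u v => Quotient.eq⟩

theorem cross_iff_of_left (h : X.IsHomogeneous) {r r' : R} (hne : r ≠ r') (hrr' : X.left r r')
    (htwin : ∀ b, X.cross r b ↔ X.cross r' b) {u v : R} (huv : X.left u v) (b : B) :
    X.cross u b ↔ X.cross v b := by
  obtain rfl | hne' := eq_or_ne u v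
  · rfl
  obtain ⟨f, rfl, rfl⟩ := h.exists_aut_left_pair hne hne' (iff_of_true hrr' huv)
  obtain ⟨b, rfl⟩ := f.onRight.surjective b
  rw [f.cross_iff, f.cross_iff, htwin]

end CliquePair.IsHomogeneous

theorem Ultrahomogeneous.isBlowUpOf_of_twins [Countable V] (h : Ultrahomogeneous G red)
    {r r' : {v // red v}} (hne : r ≠ r') (hrr' : (ofGraph hr hb).left r r')
    (htwin : ∀ b, (ofGraph hr hb).cross r b ↔ (ofGraph hr hb).cross r' b) : IsBlowUpOf G red := by
  have hX : (ofGraph hr hb).IsHomogeneous := h.isHomogeneous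
  obtain ⟨e, he⟩ := hX.exists_equiv_prod r
  refine isBlowUpOf_of_equiv ?_ Cardinal.mk_le_aleph0 e (fun u v => ?_) fun u v huv b hb' => ?_
  · exact Cardinal.two_le_iff.2 ⟨⟨r, (cliqueSetoid hr).refl r⟩, ⟨r', hrr'⟩,
      fun h => hne (congrArg Subtype.val h)⟩
  · rw [he]
    exact adj_iff_cliqueSetoid hr
  · exact hX.cross_iff_of_left hne hrr' htwin ((he u v).1 huv) ⟨b, hb'⟩

theorem IsBasicCUH.isBasic (hG : IsBasicCUH G red) : (ofGraph hr hb).IsBasic := by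
  obtain ⟨⟨hcount, hinf, hU, -, -⟩, hblow, ⟨u, v, hu, hv, huv, hadj⟩, u', v', hu', hv', huv',
    hadj'⟩ := hG
  refine ⟨hU.isHomogeneous, ?_, fun r r' hrr' htwin => ?_, fun b b' hbb' htwin => ?_,
    ⟨⟨u, hu⟩, ⟨v, hv⟩, not_or.2 ⟨by simpa using huv, hadj⟩⟩,
    ⟨⟨u', hu'⟩, ⟨v', hv'⟩, not_or.2 ⟨by simpa using huv', hadj'⟩⟩⟩
  · classical
    exact infinite_sum.1 ((Equiv.sumCompl red).infinite_iff.2 hinf)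
  · by_contra hne
    exact hblow (Or.inl (hU.isBlowUpOf_of_twins hne hrr' htwin))
  · by_contra hne
    refine hblow (Or.inr (hU.compl.isBlowUpOf_of_twins (hb := by simpa using hr) hne hbb'
      fun r => ?_))
    exact (G.adj_comm _ _).trans ((htwin ⟨r, not_not.1 r.2⟩).trans (G.adj_comm _ _))

/-! ### The small graphs -/

theorem crossComp_adj_of_iff {u v : V} (h : red u ↔ red v) :
    (crossComp G red).Adj u v ↔ G.Adj u v := by
  have hne : G.Adj u v → u ≠ v := Adj.ne
  simpa [crossComp, h, G.adj_comm v] using hne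

theorem crossComp_adj_of_not_iff {u v : V} (h : ¬ (red u ↔ red v)) :
    (crossComp G red).Adj u v ↔ ¬ G.Adj u v := by
  have hne : u ≠ v := fun huv => h (huv ▸ Iff.rfl)
  simp [crossComp, h, mt Iff.symm h, hne, G.adj_comm v]

theorem realizes_crossComp :
    Realizes (crossComp G red) red H redH ↔ Realizes G red (crossComp H redH) redH := by
  refine exists_congr fun f => and_congr_right fun _ => and_congr_right fun hf =>
    forall₂_congr fun u w => ?_
  by_cases huw : redH u ↔ redH w
  · rw [crossComp_adj_of_iff huw, crossComp_adj_of_iff (by rw [hf, hf, huw])]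
  · rw [crossComp_adj_of_not_iff huw, crossComp_adj_of_not_iff (by rwa [hf, hf])]
    tauto

theorem IsUnionOfCliques.crossComp {P : Set V} (hP : IsUnionOfCliques G P)
    (hred : ∀ u ∈ P, ∀ v ∈ P, (red u ↔ red v)) : IsUnionOfCliques (crossComp G red) P := by
  intro u hu v hv w hw
  rw [crossComp_adj_of_iff (hred u hu v hv), crossComp_adj_of_iff (hred v hv w hw),
    crossComp_adj_of_iff (hred u hu w hw)]
  exact hP u hu v hv w hw

theorem IsUnionOfCliques.crossComp_red (hr : IsUnionOfCliques G {v | red v}) :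
    IsUnionOfCliques (_root_.crossComp G red) {v | red v} :=
  hr.crossComp fun _ hu _ hv => iff_of_true hu hv

theorem IsUnionOfCliques.crossComp_blue (hb : IsUnionOfCliques G {v | ¬ red v}) :
    IsUnionOfCliques (_root_.crossComp G red) {v | ¬ red v} :=
  hb.crossComp fun _ hu _ hv => iff_of_false hu hv

theorem ofGraph_crossComp : ofGraph hr.crossComp_red hb.crossComp_blue = (ofGraph hr hb).compl := by
  simp only [ofGraph, CliquePair.compl, CliquePair.mk.injEq]
  exact ⟨Setoid.ext fun u v => or_congr_right (crossComp_adj_of_iff (iff_of_true u.2 v.2)),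
    Setoid.ext fun u v => or_congr_right (crossComp_adj_of_iff (iff_of_false u.2 v.2)),
    funext₂ fun r b => propext (crossComp_adj_of_not_iff fun h => b.2 (h.1 r.2))⟩

theorem crossComp_Tr : crossComp Tr TrRed = TrTilde := by
  ext u v
  fin_cases u <;> fin_cases v <;> simp [crossComp, Tr, TrRed, TrTilde]

theorem crossComp_Tb : crossComp Tb TbRed = TbTilde := by
  ext u v
  fin_cases u <;> fin_cases v <;> simp [crossComp, Tb, TbRed, TbTilde]

theorem crossComp_Dgraph : crossComp Dgraph Dred = Dtilde := by
  ext u v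
  fin_cases u <;> fin_cases v <;> simp [crossComp, Dgraph, Dred, Dtilde]

theorem realizes_of_adj_iff (hH : ∀ u w, u ≠ w → (redH u ↔ redH w) → H.Adj u w) {f : W → V}
    (hf : ∀ w, red (f w) ↔ redH w) (hadj : ∀ u w, G.Adj (f u) (f w) ↔ H.Adj u w) :
    Realizes G red H redH := by
  refine ⟨f, fun u w huw => ?_, hf, hadj⟩
  by_contra hne
  exact ((hadj u w).2 (hH u w hne (by rw [← hf, ← hf, huw]))).ne huw

theorem realizes_Tr_iff : Realizes G red Tr TrRed ↔ (ofGraph hr hb).RealizesTr := by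
  constructor
  · rintro ⟨f, hf, hc, ha⟩
    exact ⟨⟨f 0, (hc 0).2 (by simp [TrRed])⟩, ⟨f 1, (hc 1).2 (by simp [TrRed])⟩,
      ⟨f 2, mt (hc 2).1 (by simp [TrRed])⟩, by simp [hf.eq_iff],
      Or.inr ((ha 0 1).2 (by simp [Tr])), (ha 0 2).2 (by simp [Tr]), (ha 1 2).2 (by simp [Tr])⟩
  · rintro ⟨⟨r, hr⟩, ⟨r', hr'⟩, ⟨b, hb⟩, hne, hrr', hrb, hr'b⟩
    replace hrr' : G.Adj r r' := hrr'.resolve_left hne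
    replace hrb : G.Adj r b := hrb
    replace hr'b : G.Adj r' b := hr'b
    refine realizes_of_adj_iff (f := ![r, r', b]) (fun _ _ hne _ => hne) ?_ ?_
    · simp [Fin.forall_fin_succ, TrRed, *]
    · simp [Fin.forall_fin_succ, Tr, hrr', hrr'.symm, hrb, hrb.symm, hr'b, hr'b.symm]

theorem realizes_Tb_iff : Realizes G red Tb TbRed ↔ (ofGraph hr hb).flip.RealizesTr := by
  constructor
  · rintro ⟨f, hf, hc, ha⟩
    exact ⟨⟨f 1, mt (hc 1).1 (by simp [TbRed])⟩, ⟨f 2, mt (hc 2).1 (by simp [TbRed])⟩,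
      ⟨f 0, (hc 0).2 (by simp [TbRed])⟩, by simp [hf.eq_iff],
      Or.inr ((ha 1 2).2 (by simp [Tb])), (ha 0 1).2 (by simp [Tb]), (ha 0 2).2 (by simp [Tb])⟩
  · rintro ⟨⟨b, hb⟩, ⟨b', hb'⟩, ⟨r, hr⟩, hne, hbb', hrb, hrb'⟩
    replace hbb' : G.Adj b b' := hbb'.resolve_left hne
    replace hrb : G.Adj r b := hrb
    replace hrb' : G.Adj r b' := hrb'
    refine realizes_of_adj_iff (f := ![r, b, b']) (fun _ _ hne _ => hne) ?_ ?_
    · simp [Fin.forall_fin_succ, TbRed, *]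
    · simp [Fin.forall_fin_succ, Tb, hbb', hbb'.symm, hrb, hrb.symm, hrb', hrb'.symm]

theorem realizes_Dgraph_iff : Realizes G red Dgraph Dred ↔ ¬ (ofGraph hr hb).OmitsD := by
  constructor
  · rintro ⟨f, -, hc, ha⟩ hD
    have h13 := hD ⟨f 0, (hc 0).2 (by simp [Dred])⟩ ⟨f 1, (hc 1).2 (by simp [Dred])⟩
      ⟨f 2, mt (hc 2).1 (by simp [Dred])⟩ ⟨f 3, mt (hc 3).1 (by simp [Dred])⟩
      (Or.inr ((ha 0 1).2 (by simp [Dgraph]))) (Or.inr ((ha 2 3).2 (by simp [Dgraph])))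
      ((ha 0 2).2 (by simp [Dgraph])) ((ha 0 3).2 (by simp [Dgraph]))
      ((ha 1 2).2 (by simp [Dgraph]))
    simpa [Dgraph] using (ha 1 3).1 h13
  · intro hD
    simp only [CliquePair.OmitsD, not_forall] at hD
    obtain ⟨⟨r, hr⟩, ⟨r', hr'⟩, ⟨b, hb⟩, ⟨b', hb'⟩, hrr', hbb', hrb, hrb', hr'b, hr'b'⟩ := hD
    replace hrb : G.Adj r b := hrb
    replace hrb' : G.Adj r b' := hrb'
    replace hr'b : G.Adj r' b := hr'b
    replace hr'b' : ¬ G.Adj r' b' := hr'b'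
    replace hrr' : G.Adj r r' :=
      hrr'.resolve_left fun h => hr'b' (Subtype.mk.inj h ▸ hrb')
    replace hbb' : G.Adj b b' :=
      hbb'.resolve_left fun h => hr'b' (Subtype.mk.inj h ▸ hr'b)
    refine realizes_of_adj_iff (f := ![r, r', b, b'])
      (by simp [Fin.forall_fin_succ, Dgraph, Dred]) ?_ ?_
    · simp [Fin.forall_fin_succ, Dred, *]
    · simp [Fin.forall_fin_succ, Dgraph, hrr', hbb', hrb, hrb', hr'b, hr'b', hrr'.symm,
        hbb'.symm, hrb.symm, hrb'.symm, hr'b.symm, G.adj_comm b']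

theorem realizes_TrTilde_iff :
    Realizes G red TrTilde TrRed ↔ (ofGraph hr hb).compl.RealizesTr := by
  rw [← crossComp_Tr, ← realizes_crossComp, ← ofGraph_crossComp]
  exact realizes_Tr_iff

theorem realizes_TbTilde_iff :
    Realizes G red TbTilde TbRed ↔ (ofGraph hr hb).flip.compl.RealizesTr := by
  change _ ↔ (ofGraph hr hb).compl.flip.RealizesTr
  rw [← crossComp_Tb, ← realizes_crossComp, ← ofGraph_crossComp]
  exact realizes_Tb_iff

theorem realizes_Dtilde_iff : Realizes G red Dtilde Dred ↔ ¬ (ofGraph hr hb).compl.OmitsD := by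
  rw [← crossComp_Dgraph, ← realizes_crossComp, ← ofGraph_crossComp]
  exact realizes_Dgraph_iff

/-! ### Minimally omitted subgraphs -/

theorem MinOmitted.realizes (h : MinOmitted G red H redH) {U : Type} {K : SimpleGraph U}
    {redK : U → Prop} (hiso : ¬ ColoredIso H redH K redK) (hK : Realizes H redH K redK) :
    Realizes G red K redK := by
  obtain ⟨g, hg, hc, ha⟩ := hK
  have hrange : Set.range g ≠ Set.univ := fun hrange => by
    let e : K ≃g H := ⟨Equiv.ofBijective g ⟨hg, Set.range_eq_univ.1 hrange⟩, ha _ _⟩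
    refine hiso ⟨e.symm, fun w => ?_⟩
    obtain ⟨u, rfl⟩ := e.surjective w
    rw [e.symm_apply_apply]
    exact hc u
  obtain ⟨f, hf, hcf, haf⟩ := h.2 (Set.range g) hrange
  exact ⟨fun a => f ⟨g a, a, rfl⟩, fun a b hab => hg (congrArg Subtype.val (hf hab)),
    fun a => (hcf _).trans (hc a), fun a b => (haf _ _).trans (ha a b)⟩

theorem IsUnionOfCliques.of_realizes_induce {S : Set W}
    (h : Realizes G red (H.induce S) (fun w => redH w)) {P : Set V} (hP : IsUnionOfCliques G P)
    (hSP : ∀ v, ∀ w ∈ S, (red v ↔ redH w) → v ∈ P) : IsUnionOfCliques H S := by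
  obtain ⟨f, hf, hc, ha⟩ := h
  have hfP : ∀ w, f w ∈ P := fun w => hSP _ w w.2 (hc w)
  intro u hu v hv w hw huv hvw huw
  exact (ha ⟨u, hu⟩ ⟨w, hw⟩).1 (hP _ (hfP _) _ (hfP _) _ (hfP _)
    ((ha ⟨u, hu⟩ ⟨v, hv⟩).2 huv) ((ha ⟨v, hv⟩ ⟨w, hw⟩).2 hvw)
    (hf.ne (Subtype.coe_injective.ne_iff.1 huw)))

theorem MinOmitted.isUnionOfCliques_red (h : MinOmitted G red H redH) (hb : ∃ w, ¬ redH w)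
    (hr : IsUnionOfCliques G {v | red v}) : IsUnionOfCliques H {w | redH w} :=
  hr.of_realizes_induce (h.2 _ (by simpa [Set.eq_univ_iff_forall] using hb))
    fun _ _ hw hvw => hvw.2 hw

theorem MinOmitted.isUnionOfCliques_blue (h : MinOmitted G red H redH) (hr : ∃ w, redH w)
    (hb : IsUnionOfCliques G {v | ¬ red v}) : IsUnionOfCliques H {w | ¬ redH w} :=
  hb.of_realizes_induce (h.2 _ (by simpa [Set.eq_univ_iff_forall] using hr))
    fun _ _ hw hvw => mt hvw.1 hw

variable {hrH : IsUnionOfCliques H {w | redH w}} {hbH : IsUnionOfCliques H {w | ¬ redH w}}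

theorem embedsOn_map {F : W → V} (hF : ∀ w, red (F w) ↔ redH w) {S : Set W}
    (hinj : S.InjOn F) (hadj : ∀ u ∈ S, ∀ w ∈ S, (G.Adj (F u) (F w) ↔ H.Adj u w)) :
    (ofGraph hr hb).EmbedsOn (ofGraph hrH hbH) {i | i.1 ∈ S} {j | j.1 ∈ S}
      (Subtype.map F fun w => (hF w).2) (Subtype.map F fun w => mt (hF w).1) where
  injOn_left _ hi _ hj h := Subtype.ext (hinj hi hj (congrArg Subtype.val h))
  injOn_right _ hi _ hj h := Subtype.ext (hinj hi hj (congrArg Subtype.val h))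
  left_iff i hi j hj :=
    or_congr (Subtype.ext_iff.trans ((hinj.eq_iff hi hj).trans Subtype.ext_iff.symm))
      (hadj i hi j hj)
  right_iff i hi j hj :=
    or_congr (Subtype.ext_iff.trans ((hinj.eq_iff hi hj).trans Subtype.ext_iff.symm))
      (hadj i hi j hj)
  cross_iff i hi j hj := hadj i hi j hj

theorem Realizes.exists_embedsOn [Nonempty {v // red v}] [Nonempty {v // ¬ red v}] {S : Set W}
    (h : Realizes G red (H.induce S) (fun w => redH w)) :
    ∃ x y, (ofGraph hr hb).EmbedsOn (ofGraph hrH hbH) {i | i.1 ∈ S} {j | j.1 ∈ S} x y := by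
  classical
  obtain ⟨f, hf, hc, ha⟩ := h
  obtain ⟨⟨r, hr'⟩⟩ := ‹Nonempty {v // red v}›
  obtain ⟨⟨b, hb'⟩⟩ := ‹Nonempty {v // ¬ red v}›
  let F : W → V := fun w => if hw : w ∈ S then f ⟨w, hw⟩ else if redH w then r else b
  have hFS : ∀ w : S, F w = f w := fun w => dif_pos w.2
  have hF : ∀ w, red (F w) ↔ redH w := by
    intro w
    by_cases hw : w ∈ S
    · exact hFS ⟨w, hw⟩ ▸ hc ⟨w, hw⟩
    · by_cases hred : redH w <;> simp [F, hw, hred, hr', hb']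
  refine ⟨_, _, embedsOn_map hF (fun u hu w hw huw => ?_) fun u hu w hw => ?_⟩
  · rw [hFS ⟨u, hu⟩, hFS ⟨w, hw⟩] at huw
    exact congrArg Subtype.val (hf huw)
  · rw [hFS ⟨u, hu⟩, hFS ⟨w, hw⟩]
    exact ha ⟨u, hu⟩ ⟨w, hw⟩

theorem CliquePair.EmbedsOn.realizes {x : {w // redH w} → {v // red v}}
    {y : {w // ¬ redH w} → {v // ¬ red v}}
    (h : (ofGraph hr hb).EmbedsOn (ofGraph hrH hbH) Set.univ Set.univ x y) :
    Realizes G red H redH := by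
  classical
  have hleft : ∀ i j, G.Adj (x i) (x j) ↔ H.Adj i j := fun i j => by
    rw [adj_iff_cliqueSetoid hr, adj_iff_cliqueSetoid hrH]
    exact and_congr (Set.injOn_univ.1 h.injOn_left).ne_iff (h.left_iff i trivial j trivial)
  have hright : ∀ i j, G.Adj (y i) (y j) ↔ H.Adj i j := fun i j => by
    rw [adj_iff_cliqueSetoid hb, adj_iff_cliqueSetoid hbH]
    exact and_congr (Set.injOn_univ.1 h.injOn_right).ne_iff (h.right_iff i trivial j trivial)
  have hcross : ∀ i j, G.Adj (x i) (y j) ↔ H.Adj i j := fun i j =>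
    h.cross_iff i trivial j trivial
  refine ⟨Equiv.sumCompl red ∘ Sum.map x y ∘ (Equiv.sumCompl redH).symm, ?_, ?_, ?_⟩
  · exact (Equiv.injective _).comp (((Set.injOn_univ.1 h.injOn_left).sumMap
      (Set.injOn_univ.1 h.injOn_right)).comp (Equiv.injective _))
  · intro w
    obtain ⟨i | j, rfl⟩ := (Equiv.sumCompl redH).surjective w
    · simpa using iff_of_true (x i).2 i.2
    · simpa using iff_of_false (y j).2 j.2
  · intro u w
    obtain ⟨i | i, rfl⟩ := (Equiv.sumCompl redH).surjective u <;>
      obtain ⟨j | j, rfl⟩ := (Equiv.sumCompl redH).surjective w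
    · simpa using hleft i j
    · simpa using hcross i j
    · simpa [adj_comm] using hcross j i
    · simpa using hright i j

theorem MinOmitted.isCritical (hmin : MinOmitted G red H redH) (hX : (ofGraph hr hb).IsBalanced)
    [Nonempty {v // red v}] [Nonempty {v // ¬ red v}] (h1 : ∃ w, redH w) (h2 : ∃ w, ¬ redH w)
    (hn1 : ¬ ColoredIso H redH Tr TrRed) (hn2 : ¬ ColoredIso H redH TrTilde TrRed)
    (hn3 : ¬ ColoredIso H redH Tb TbRed) (hn4 : ¬ ColoredIso H redH TbTilde TbRed)
    (hn5 : ¬ ColoredIso H redH Dgraph Dred) (hn6 : ¬ ColoredIso H redH Dtilde Dred) :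
    (ofGraph hr hb).IsCritical (ofGraph hrH hbH) where
  nonempty_left := nonempty_subtype.2 h1
  nonempty_right := nonempty_subtype.2 h2
  omitted x y hxy := hmin.1 hxy.realizes
  delete_left i := by
    have hi : Realizes G red (H.induce {i.1}ᶜ) (fun w => redH w) :=
      hmin.2 _ (by simp [Set.eq_univ_iff_forall])
    convert hi.exists_embedsOn using 6
    · simp [Subtype.ext_iff, Set.ext_iff]
    · exact (Set.eq_univ_of_forall fun j => (ne_of_red_of_not_red i.2 j.2).symm).symm
  delete_right j := by
    have hj : Realizes G red (H.induce {j.1}ᶜ) (fun w => redH w) :=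
      hmin.2 _ (by simp [Set.eq_univ_iff_forall])
    convert hj.exists_embedsOn using 6
    · exact (Set.eq_univ_of_forall fun i => ne_of_red_of_not_red i.2 j.2).symm
    · simp [Subtype.ext_iff, Set.ext_iff]
  balanced := by
    refine CliquePair.OmitsD.isBalanced ?_ ?_
    · by_contra hD
      exact realizes_Dgraph_iff.1 (hmin.realizes hn5 (realizes_Dgraph_iff.2 hD)) hX.omitsD
    · by_contra hD
      exact realizes_Dtilde_iff.1 (hmin.realizes hn6 (realizes_Dtilde_iff.2 hD)) hX.compl.omitsD
  realizesTr h := realizes_Tr_iff.1 (hmin.realizes hn1 (realizes_Tr_iff.2 h))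
  realizesTr_compl h := realizes_TrTilde_iff.1 (hmin.realizes hn2 (realizes_TrTilde_iff.2 h))
  realizesTr_flip h := realizes_Tb_iff.1 (hmin.realizes hn3 (realizes_Tb_iff.2 h))
  realizesTr_flip_compl h := realizes_TbTilde_iff.1 (hmin.realizes hn4 (realizes_TbTilde_iff.2 h))

theorem two_le_card_and_independent [Finite W] {p : W → Prop} {hp : IsUnionOfCliques H {w | p w}}
    (hcl : ∃ i j, ¬ cliqueSetoid hp i j) (hedge : ¬ ∃ i j, i ≠ j ∧ cliqueSetoid hp i j) :
    2 ≤ Nat.card {w | p w} ∧ ∀ u v, p u → p v → ¬ H.Adj u v := by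
  obtain ⟨i, j, hij⟩ := hcl
  have : Nontrivial {w | p w} := ⟨i, j, fun h => hij (Or.inl h)⟩
  exact ⟨Finite.one_lt_card, fun u v hu hv huv =>
    hedge ⟨⟨u, hu⟩, ⟨v, hv⟩, Subtype.coe_injective.ne_iff.1 huv.ne, Or.inr huv⟩⟩

end Translation

/-- in a basic CUH graph omitting `D` with a non-independent color class,
every non-monochromatic minimally omitted subgraph not isomorphic to one of
`T_r, T̃_r, T_b, T̃_b, D, D̃` has both color classes independent of size at least 2. -/
theorem stmt_14 {V W : Type} [Fintype W] (G : SimpleGraph V) (red : V → Prop)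
    (hG : IsBasicCUH G red)
    (hOmD : ¬ Realizes G red Dgraph Dred)
    (hni : (∃ u v, red u ∧ red v ∧ G.Adj u v) ∨ (∃ u v, ¬ red u ∧ ¬ red v ∧ G.Adj u v))
    (H : SimpleGraph W) (redH : W → Prop)
    (hmin : MinOmitted G red H redH)
    (h1 : ∃ w, redH w) (h2 : ∃ w, ¬ redH w)
    (hn1 : ¬ ColoredIso H redH Tr TrRed) (hn2 : ¬ ColoredIso H redH TrTilde TrRed)
    (hn3 : ¬ ColoredIso H redH Tb TbRed) (hn4 : ¬ ColoredIso H redH TbTilde TbRed)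
    (hn5 : ¬ ColoredIso H redH Dgraph Dred) (hn6 : ¬ ColoredIso H redH Dtilde Dred) :
    (2 ≤ Nat.card {w | redH w}) ∧ (∀ u v, redH u → redH v → ¬ H.Adj u v) ∧
    (2 ≤ Nat.card {w | ¬ redH w}) ∧ (∀ u v, ¬ redH u → ¬ redH v → ¬ H.Adj u v) := by
  have hr : IsUnionOfCliques G {v | red v} := hG.1.2.2.2.1
  have hb : IsUnionOfCliques G {v | ¬ red v} := hG.1.2.2.2.2
  have hrH : IsUnionOfCliques H {w | redH w} := hmin.isUnionOfCliques_red h2 hr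
  have hbH : IsUnionOfCliques H {w | ¬ redH w} := hmin.isUnionOfCliques_blue h1 hb
  have hX : (ofGraph hr hb).IsBasic := hG.isBasic
  have hbal : (ofGraph hr hb).IsBalanced :=
    hX.isBalanced (not_not.1 (mt realizes_Dgraph_iff.2 hOmD))
  have hedge : (ofGraph hr hb).HasLeftEdge ∨ (ofGraph hr hb).flip.HasLeftEdge := by
    refine hni.imp ?_ ?_ <;> rintro ⟨u, v, hu, hv, huv⟩ <;>
      exact ⟨⟨u, hu⟩, ⟨v, hv⟩, Subtype.coe_injective.ne_iff.1 huv.ne, Or.inr huv⟩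
  have : Nonempty {v // red v} := hX.two_left.nonempty
  have : Nonempty {v // ¬ red v} := hX.two_right.nonempty
  have hcrit : (ofGraph hr hb).IsCritical (ofGraph hrH hbH) :=
    hmin.isCritical hbal h1 h2 hn1 hn2 hn3 hn4 hn5 hn6
  obtain ⟨hR, hRe⟩ := hcrit.independent_left hX hbal hedge
  obtain ⟨hB, hBe⟩ := hcrit.flip.independent_left hX.flip hbal.flip hedge.symm
  obtain ⟨hcardR, hindR⟩ := two_le_card_and_independent (hp := hrH) hR hRe
  exact ⟨hcardR, hindR, two_le_card_and_independent (hp := hbH) hB hBe⟩
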